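/- arXiv:2510.21234 — 2 statements merged into one kernel-verified Lean document; each statement's English description precedes it below -/
import Mathlib

section
/- Let X be a real Banach space. The following are equivalent: (1) X has the Radon–Nikodým property, in its geometric form: for every nonempty bounded subset A of X and every ε > 0 there exist f ∈ X* and α > 0 such that the slice S(A,f,α) is nonempty and has diameter less than ε; (2) every nonempty closed, convex and bounded subset C of X has an almost preserved extreme point, i.e. ape(C) ≠ ∅. -/
/-!
Both implications rest on one construction. Let `C` be a bounded convex set and suppose that no
slice of `C` contained in a given slice `S₀` lies in a ball of radius `2 r`. By a form of the
Namioka–Asplund–Bourgain superlemma (`exists_subslice_avoiding`), every slice of `C` inside `S₀`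
contains a further slice missing any prescribed ball of radius `r`. By Hahn–Banach, a point lying
deep in such a slice `S` is then almost a convex combination of finitely many points, each deep in
a slice of `C` that is contained in `S` and misses the ball (`exists_children`): the mass that
would have to be put outside `S` is negligible because the point is deep. Iterating with summable
errors and passing to the limit of the iterated averages gives an exact, finitely branching bush
whose slices decrease along branches and avoid prescribed balls (`exists_bush`).

If bounded sets are dentable, take the balls centred at the points of the bush itself: the bush
would be a bounded set without small slices. Hence every slice of `C` contains arbitrarily small
slices of `C`, and a shrinking sequence of slices converges to a denting point, which is an almost
preserved extreme point (`ape_nonempty_of_dentable`).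

If some bounded set is not dentable, it contains a countable nondentable set, so `C` may be taken
separable. Let the slices of level `n + 1` avoid the ball about the `n`-th term of a dense
sequence, and let `C'` be the closed convex hull of the bush. For each `n`, every slice of `C'`
meets one of the finitely many closed slices of level `n + 1`; a finite union of closed convex sets
being weakly closed, an almost preserved extreme point of `C'` lies in this union, hence outside
the `n`-th ball. As these balls cover `C'`, there is no such point (`exists_ape_empty`).
-/

open Set Metric Topology Bornology

noncomputable section

/-- The weak topology σ(X, X*) on a normed space X. -/
def weakTop (X : Type*) [NormedAddCommGroup X] [NormedSpace ℝ X] : TopologicalSpace X :=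
  TopologicalSpace.induced (fun (x : X) => (fun f : X →L[ℝ] ℝ => f x)) inferInstance

/-- The slice of `C` determined by `f` and `α`. -/
def sliceOf {X : Type*} [NormedAddCommGroup X] [NormedSpace ℝ X]
    (C : Set X) (f : X →L[ℝ] ℝ) (α : ℝ) : Set X :=
  {x ∈ C | sSup ((fun y => f y) '' C) - α < f x}

/-- Almost preserved extreme points of `C`. -/
def ape {X : Type*} [NormedAddCommGroup X] [NormedSpace ℝ X] (C : Set X) : Set X :=
  {x ∈ C | ∀ U : Set X, IsOpen[weakTop X] U → x ∈ U →
    ∃ (f : X →L[ℝ] ℝ) (α : ℝ), 0 < α ∧ (sliceOf C f α).Nonempty ∧ sliceOf C f α ⊆ U}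


/-! ### Half-spaces and convexity -/

section Bush

universe u

variable {X : Type u} [NormedAddCommGroup X] [NormedSpace ℝ X]

theorem convex_halfspace (f : X →L[ℝ] ℝ) (u : ℝ) : Convex ℝ {x | f x ≤ u} :=
  convex_halfSpace_le f.toLinearMap.isLinear u

theorem exists_gt_of_mem_closure_convexHull {A : Set X} {x : X}
    (hx : x ∈ closure (convexHull ℝ A)) {f : X →L[ℝ] ℝ} {u : ℝ} (hu : u < f x) :
    ∃ a ∈ A, u < f a := by
  by_contra! h
  have h1 : convexHull ℝ A ⊆ {x | f x ≤ u} := convexHull_min h (convex_halfspace f u)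
  have h2 : closure (convexHull ℝ A) ⊆ {x | f x ≤ u} :=
    closure_minimal h1 (isClosed_le f.continuous continuous_const)
  exact absurd (h2 hx) (not_le.2 hu)

theorem convexOn_infDist_of_convex {K : Set X} (hK : Convex ℝ K) (hne : K.Nonempty) :
    ConvexOn ℝ univ (fun x => infDist x K) := by
  refine ⟨convex_univ, fun x _ y _ a b ha hb hab => le_of_forall_pos_le_add fun e he => ?_⟩
  obtain ⟨p, hp, hxp⟩ := (infDist_lt_iff hne).1 (lt_add_of_pos_right (infDist x K) he)
  obtain ⟨q, hq, hyq⟩ := (infDist_lt_iff hne).1 (lt_add_of_pos_right (infDist y K) he)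
  have h1 : infDist (a • x + b • y) K ≤ dist (a • x + b • y) (a • p + b • q) :=
    infDist_le_dist_of_mem (hK hp hq ha hb hab)
  have h2 : dist (a • x + b • y) (a • p + b • q) ≤ a * dist x p + b * dist y q := by
    refine (dist_add_add_le _ _ _ _).trans ?_
    rw [dist_smul₀, dist_smul₀, Real.norm_of_nonneg ha, Real.norm_of_nonneg hb]
  simp only [smul_eq_mul]
  nlinarith [mul_le_mul_of_nonneg_left hxp.le ha, mul_le_mul_of_nonneg_left hyq.le hb]

/-- The sets used to bound a convex function `φ` on a convex set by an affine function. -/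
theorem convex_closed_affine_bound {φ : X → ℝ} (hφ : ConvexOn ℝ univ φ) (hc : Continuous φ)
    (f : X →L[ℝ] ℝ) {a : ℝ} (ha : 0 ≤ a) (L M : ℝ) :
    Convex ℝ {x | a * φ x ≤ L * (M - f x)} ∧ IsClosed {x | a * φ x ≤ L * (M - f x)} := by
  constructor
  · intro x hx y hy s t hs ht hst
    simp only [mem_ofPred_eq] at *
    have h := hφ.2 (mem_univ x) (mem_univ y) hs ht hst
    simp only [smul_eq_mul] at h
    have h2 : f (s • x + t • y) = s * f x + t * f y := by simp
    rw [h2]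
    have h3 := mul_le_mul_of_nonneg_left h ha
    have h4 := mul_le_mul_of_nonneg_left hx hs
    have h5 := mul_le_mul_of_nonneg_left hy ht
    have h6 : L * (M - (s * f x + t * f y))
        = s * (L * (M - f x)) + t * (L * (M - f y)) := by
      have : s = 1 - t := by linarith
      subst this; ring
    rw [h6]
    linarith
  · exact isClosed_le (by fun_prop) (by fun_prop)

/-- A superlemma of Namioka–Asplund–Bourgain type, localized: if no slice
`{f > v}` of `C` with `v ≥ u` lies in the ball of radius `2 r` about `z`, then `{f > u}` contains a slice
of `C` missing the ball of radius `r` about `z`. Otherwise `‖x - z‖ - r` would be dominated on `C` by a multiple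
of `sup f - f`, which makes the slices `{f > sup f - small}` too small. -/
theorem exists_subslice_avoiding {C : Set X} {R r : ℝ} (hr : 0 < r) (hR : ∀ x ∈ C, ‖x‖ ≤ R)
    {f : X →L[ℝ] ℝ} {u : ℝ} (hne : ∃ x ∈ C, u < f x) (z : X)
    (H : ∀ v, (∃ x ∈ C, v < f x) → u ≤ v → ∃ x ∈ C, v < f x ∧ 2 * r < ‖x - z‖) :
    ∃ (g : X →L[ℝ] ℝ) (v : ℝ), (∃ x ∈ C, v < g x) ∧
      ∀ x ∈ C, v < g x → u < f x ∧ r < ‖x - z‖ := by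
  by_contra! hcon
  obtain ⟨x₀, hx₀, hux₀⟩ := hne
  have hRz : ∀ x ∈ C, ‖x - z‖ ≤ R + ‖z‖ := fun x hx =>
    (norm_sub_le x z).trans (by linarith [hR x hx])
  have hL : 0 ≤ R + ‖z‖ := (norm_nonneg _).trans (hRz x₀ hx₀)
  set L := R + ‖z‖
  have hbdd : BddAbove (f '' C) := by
    refine ⟨‖f‖ * R, ?_⟩
    rintro _ ⟨x, hx, rfl⟩
    exact (le_abs_self _).trans ((f.le_opNorm x).trans
      (mul_le_mul_of_nonneg_left (hR x hx) (norm_nonneg f)))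
  set M := sSup (f '' C)
  have hM : ∀ x ∈ C, f x ≤ M := fun x hx => le_csSup hbdd ⟨x, hx, rfl⟩
  have huM : u < M := hux₀.trans_le (hM x₀ hx₀)
  have hφ : ConvexOn ℝ univ (fun x : X => ‖x - z‖ - r) := by
    have h1 := (convexOn_univ_dist (E := X) z).add_const (-r)
    refine h1.congr fun x _ => ?_
    simp [dist_eq_norm, sub_eq_add_neg]
  obtain ⟨hQ1, hQ2⟩ := convex_closed_affine_bound hφ (by fun_prop) f (sub_nonneg.2 huM.le) L M
  have hCQ : ∀ x ∈ C, (M - u) * (‖x - z‖ - r) ≤ L * (M - f x) := by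
    intro x hx
    by_contra hxQ
    obtain ⟨g, v, hg, hgx⟩ := geometric_hahn_banach_closed_point hQ1 hQ2 hxQ
    obtain ⟨y, hy, hvy, hy2⟩ := hcon g v ⟨x, hx, hgx⟩
    refine absurd (hg y ?_) (not_lt.2 hvy.le)
    simp only [mem_ofPred_eq]
    have hfy := hM y hy
    by_cases huy : u < f y
    · have := hy2 huy
      nlinarith [mul_nonneg hL (sub_nonneg.2 hfy)]
    · have := hRz y hy
      push Not at huy
      nlinarith [mul_le_mul_of_nonneg_left huy hL,
        mul_le_mul_of_nonneg_left (show ‖y - z‖ - r ≤ L by linarith) (sub_nonneg.2 huM.le)]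
  have hLr : 0 < L + r := by linarith
  -- the height `t` of the thin slice is chosen so that `L * t ≤ r`
  set t := r / (L + r)
  have ht0 : 0 < t := div_pos hr hLr
  have ht1 : t ≤ 1 := (div_le_one hLr).2 (by linarith)
  have htL : L * t ≤ r := by
    rw [← mul_div_assoc, div_le_iff₀ hLr]; nlinarith
  have hMu : 0 < M - u := sub_pos.2 huM
  have hlt : M - t * (M - u) < M := by nlinarith
  obtain ⟨_, ⟨x₁, hx₁, rfl⟩, hx₁'⟩ :=
    exists_lt_of_lt_csSup (show (f '' C).Nonempty from ⟨_, x₀, hx₀, rfl⟩) hlt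
  obtain ⟨y, hy, hvy, hyz⟩ := H _ ⟨x₁, hx₁, hx₁'⟩ (by nlinarith)
  have h1 := hCQ y hy
  have h2 : L * (M - f y) ≤ L * (t * (M - u)) := mul_le_mul_of_nonneg_left (by linarith) hL
  have h3 : L * (t * (M - u)) ≤ r * (M - u) := by nlinarith
  nlinarith

/-! ### Construction of the bush -/

/-- A node of a bush in `C`: a level, a slice `{f > u}` of `C` contained in the reference slice
`{f₀ > u₀}`, an upper bound `M > u` of `f` on `C`, and a point `x` of `C` which is `δ`-deep in
the slice, that is, `f x` differs from `M` by at most the fraction `δ lvl` of `M - u`. -/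
structure BushNode (C : Set X) (f₀ : X →L[ℝ] ℝ) (u₀ : ℝ) (δ : ℕ → ℝ) where
  lvl : ℕ
  f : X →L[ℝ] ℝ
  u : ℝ
  M : ℝ
  x : X
  sub : ∀ y ∈ C, u < f y → u₀ < f₀ y
  le_M : ∀ y ∈ C, f y ≤ M
  u_lt : u < M
  mem : x ∈ C
  deep : M - f x ≤ δ lvl * (M - u)

/-- The slice of `C` attached to a node. -/
def BushNode.slice {C : Set X} {f₀ : X →L[ℝ] ℝ} {u₀ : ℝ} {δ : ℕ → ℝ}
    (s : BushNode C f₀ u₀ δ) : Set X := {y ∈ C | s.u < s.f y}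

variable {C : Set X} {f₀ : X →L[ℝ] ℝ} {u₀ : ℝ} {δ : ℕ → ℝ}

theorem BushNode.x_mem_slice (hδ : ∀ n, δ n < 1) (s : BushNode C f₀ u₀ δ) : s.x ∈ s.slice := by
  refine ⟨s.mem, ?_⟩
  have h1 := s.deep
  have h2 := mul_lt_mul_of_pos_right (hδ s.lvl) (sub_pos.2 s.u_lt)
  linarith

theorem BushNode.convex_slice (hC : Convex ℝ C) (s : BushNode C f₀ u₀ δ) :
    Convex ℝ s.slice :=
  hC.inter (convex_halfSpace_gt s.f.toLinearMap.isLinear s.u)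

theorem exists_bushNode {R : ℝ} (hR : ∀ x ∈ C, ‖x‖ ≤ R) (hδ : ∀ n, 0 < δ n)
    {g : X →L[ℝ] ℝ} {v : ℝ} (hne : ∃ x ∈ C, v < g x) (hsub : ∀ x ∈ C, v < g x → u₀ < f₀ x)
    (n : ℕ) : ∃ s : BushNode C f₀ u₀ δ, s.lvl = n ∧ s.f = g ∧ s.u = v := by
  obtain ⟨x₀, hx₀, hvx₀⟩ := hne
  have hbdd : BddAbove (g '' C) := by
    refine ⟨‖g‖ * R, ?_⟩
    rintro _ ⟨x, hx, rfl⟩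
    exact (le_abs_self _).trans ((g.le_opNorm x).trans
      (mul_le_mul_of_nonneg_left (hR x hx) (norm_nonneg g)))
  have hM : ∀ x ∈ C, g x ≤ sSup (g '' C) := fun x hx => le_csSup hbdd ⟨x, hx, rfl⟩
  have hvM : v < sSup (g '' C) := hvx₀.trans_le (hM x₀ hx₀)
  have hlt : sSup (g '' C) - δ n * (sSup (g '' C) - v) < sSup (g '' C) := by
    linarith [mul_pos (hδ n) (sub_pos.2 hvM)]
  obtain ⟨_, ⟨x₁, hx₁, rfl⟩, hx₁'⟩ :=
    exists_lt_of_lt_csSup (show (g '' C).Nonempty from ⟨_, x₀, hx₀, rfl⟩) hlt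
  exact ⟨⟨n, g, v, sSup (g '' C), x₁, hsub, hM, hvM, hx₁, by linarith⟩, rfl, rfl, rfl⟩

/-- The splitting step. Let `P` be the set of deep points of the slices of `C` that lie inside
the slice of `s` and avoid the ball about `z`. Every slice inside that of `s` meets `P`, so the
distance to `conv P` is dominated on `C` by a multiple of `M - f`; hence the deep point of `s` is
almost a convex combination of points of `P`. -/
theorem exists_children {R r : ℝ} (hr : 0 < r) (hR : ∀ x ∈ C, ‖x‖ ≤ R)
    (H : ∀ (g : X →L[ℝ] ℝ) (v : ℝ), (∃ x ∈ C, v < g x) → (∀ x ∈ C, v < g x → u₀ < f₀ x) →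
      ∀ z, ∃ x ∈ C, v < g x ∧ 2 * r < ‖x - z‖)
    (hδ : ∀ n, 0 < δ n ∧ δ n < 1) (s : BushNode C f₀ u₀ δ) (z : X) {η : ℝ}
    (hη : 2 * R * δ s.lvl < η) :
    ∃ (t : Finset X) (w : X → ℝ) (N : X → BushNode C f₀ u₀ δ),
      (∀ y ∈ t, 0 ≤ w y) ∧ ∑ y ∈ t, w y = 1 ∧ ‖s.x - ∑ y ∈ t, w y • (N y).x‖ ≤ η ∧
      ∀ y ∈ t, (N y).lvl = s.lvl + 1 ∧ (N y).slice ⊆ s.slice ∧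
        ∀ a ∈ (N y).slice, r < ‖a - z‖ := by
  classical
  set P : Set X := {p | ∃ n : BushNode C f₀ u₀ δ, n.x = p ∧ n.lvl = s.lvl + 1 ∧
    n.slice ⊆ s.slice ∧ ∀ a ∈ n.slice, r < ‖a - z‖} with hP
  have key : ∀ (g : X →L[ℝ] ℝ) (v : ℝ), (∃ x ∈ C, v < g x) →
      (∀ x ∈ C, v < g x → s.u < s.f x) → ∃ p ∈ P, v < g p := by
    intro g v hne hsub
    obtain ⟨g', v', hne', h'⟩ := exists_subslice_avoiding hr hR hne z
      (fun v₁ h1 h2 => H g v₁ h1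
        (fun x hx hv => s.sub x hx (hsub x hx (h2.trans_lt hv))) z)
    obtain ⟨n, hn, hf, hu⟩ := exists_bushNode (δ := δ) hR (fun n => (hδ n).1) hne'
      (fun x hx hv => s.sub x hx (hsub x hx (h' x hx hv).1)) (s.lvl + 1)
    have hin : ∀ a ∈ n.slice, v < g a ∧ r < ‖a - z‖ := by
      rintro a ⟨ha, hua⟩
      rw [hf, hu] at hua
      exact h' a ha hua
    have hx := n.x_mem_slice (fun n => (hδ n).2)
    exact ⟨n.x, ⟨n, rfl, hn, fun a ha => ⟨ha.1, hsub a ha.1 (hin a ha).1⟩,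
      fun a ha => (hin a ha).2⟩, (hin _ hx).1⟩
  have hPC : P ⊆ C := by
    rintro _ ⟨n, rfl, -⟩
    exact n.mem
  obtain ⟨p₀, hp₀, -⟩ := key s.f s.u ⟨s.x, s.x_mem_slice (fun n => (hδ n).2)⟩ (fun _ _ h => h)
  have hne : (convexHull ℝ P).Nonempty := ⟨p₀, subset_convexHull ℝ P hp₀⟩
  have hR0 : 0 ≤ R := (norm_nonneg _).trans (hR _ s.mem)
  have hMu : 0 < s.M - s.u := sub_pos.2 s.u_lt
  obtain ⟨hQ1, hQ2⟩ := convex_closed_affine_bound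
    (convexOn_infDist_of_convex (convex_convexHull ℝ P) hne) (continuous_infDist_pt _)
    s.f hMu.le (2 * R) s.M
  have hCQ : ∀ x ∈ C, (s.M - s.u) * infDist x (convexHull ℝ P) ≤ 2 * R * (s.M - s.f x) := by
    intro x hx
    by_contra hxQ
    obtain ⟨g, v, hg, hgx⟩ := geometric_hahn_banach_closed_point hQ1 hQ2 hxQ
    obtain ⟨p, hp, hvp⟩ := key g v ⟨x, hx, hgx⟩ (by
      intro y hy hvy
      by_contra! huy
      refine absurd (hg y ?_) (not_lt.2 hvy.le)
      simp only [mem_ofPred_eq]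
      have h1 : infDist y (convexHull ℝ P) ≤ 2 * R := by
        refine (infDist_le_dist_of_mem (subset_convexHull ℝ P hp₀)).trans ?_
        rw [dist_eq_norm]
        exact (norm_sub_le _ _).trans (by linarith [hR y hy, hR p₀ (hPC hp₀)])
      nlinarith [mul_le_mul_of_nonneg_left h1 hMu.le,
        mul_le_mul_of_nonneg_left huy (show 0 ≤ 2 * R by linarith)])
    refine absurd (hg p ?_) (not_lt.2 hvp.le)
    simp only [mem_ofPred_eq]
    rw [infDist_zero_of_mem (subset_convexHull ℝ P hp), mul_zero]
    exact mul_nonneg (by linarith) (sub_nonneg.2 (s.le_M p (hPC hp)))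
  have hdist : infDist s.x (convexHull ℝ P) < η := by
    refine lt_of_le_of_lt ?_ hη
    have h1 := hCQ s.x s.mem
    have h2 := mul_le_mul_of_nonneg_left s.deep (show 0 ≤ 2 * R by linarith)
    refine le_of_mul_le_mul_left ?_ hMu
    linarith
  obtain ⟨q, hq, hxq⟩ := (infDist_lt_iff hne).1 hdist
  rw [convexHull_eq_union_convexHull_finite_subsets] at hq
  simp only [mem_iUnion] at hq
  obtain ⟨t, htP, hqt⟩ := hq
  obtain ⟨w, hw0, hw1, hwq⟩ := Finset.mem_convexHull'.1 hqt
  have hex : ∀ y : X, ∃ n : BushNode C f₀ u₀ δ, y ∈ t → n.x = y ∧ n.lvl = s.lvl + 1 ∧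
      n.slice ⊆ s.slice ∧ ∀ a ∈ n.slice, r < ‖a - z‖ := by
    intro y
    by_cases hy : y ∈ t
    · obtain ⟨n, hn⟩ := htP hy
      exact ⟨n, fun _ => hn⟩
    · exact ⟨s, fun h => absurd h hy⟩
  choose N hN using hex
  refine ⟨t, w, N, hw0, hw1, ?_, fun y hy => (hN y hy).2⟩
  have : ∑ y ∈ t, w y • (N y).x = q := by
    rw [← hwq]
    exact Finset.sum_congr rfl fun y hy => by rw [(hN y hy).1]
  rw [this, ← dist_eq_norm]
  exact hxq.le

/-- The bush. If no slice of `C` inside `{f₀ > u₀}` lies in a ball of radius `2 r`, there is a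
finitely branching system of slices `S s`, decreasing along the branches, and of points `y s` in
the closure of `S s`, each a convex combination of the points of its children. The children of
`s` avoid the ball of radius `r` about a prescribed centre, which may depend on the level of `s`
and on a point `x s` within `r / 2` of `y s`. -/
theorem exists_bush [CompleteSpace X] (hC : Convex ℝ C) {R r : ℝ} (hr : 0 < r)
    (hR : ∀ x ∈ C, ‖x‖ ≤ R) (hne : ∃ x ∈ C, u₀ < f₀ x)
    (H : ∀ (g : X →L[ℝ] ℝ) (v : ℝ), (∃ x ∈ C, v < g x) → (∀ x ∈ C, v < g x → u₀ < f₀ x) →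
      ∀ z, ∃ x ∈ C, v < g x ∧ 2 * r < ‖x - z‖) (c : ℕ → X → X) :
    ∃ (N : Type u) (root : N) (lvl : N → ℕ) (S : N → Set X) (x y : N → X) (D : N → Set N),
      lvl root = 0 ∧ ∀ s, S s ⊆ C ∧ Convex ℝ (S s) ∧ y s ∈ closure (S s) ∧
        ‖x s - y s‖ ≤ r / 2 ∧
        (D s).Finite ∧ y s ∈ convexHull ℝ (y '' D s) ∧
        ∀ t ∈ D s, lvl t = lvl s + 1 ∧ S t ⊆ S s ∧ ∀ a ∈ S t, r < ‖a - c (lvl s) (x s)‖ := by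
  obtain ⟨x₀, hx₀, -⟩ := id hne
  have hR0 : 0 ≤ R := (norm_nonneg _).trans (hR _ hx₀)
  -- the error allowed in a splitting at level `n`
  set η : ℕ → ℝ := fun n => r / 2 / 2 / 2 ^ n with hη
  have hη0 : ∀ n, 0 < η n := fun n => by simp only [hη]; positivity
  set δ : ℕ → ℝ := fun n => η n / (2 * R + 1 + η n) with hδdef
  have hδ : ∀ n, 0 < δ n ∧ δ n < 1 := fun n => by
    have := hη0 n
    have h : 0 < 2 * R + 1 + η n := by linarith
    exact ⟨div_pos this h, (div_lt_one h).2 (by linarith)⟩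
  have hδη : ∀ n, 2 * R * δ n < η n := fun n => by
    have := hη0 n
    have h : 0 < 2 * R + 1 + η n := by linarith
    simp only [hδdef]
    rw [← mul_div_assoc, div_lt_iff₀ h]
    nlinarith
  choose t w N hw0 hw1 hwx hN using fun s : BushNode C f₀ u₀ δ =>
    exists_children hr hR H hδ s (c s.lvl s.x) (hδη s.lvl)
  obtain ⟨root, hroot, -, -⟩ := exists_bushNode (δ := δ) hR (fun n => (hδ n).1) hne
    (fun _ _ h => h) 0
  -- `avg φ` averages `φ` over the children; `y` is the limit of the iterated averages of `x`
  set avg : (BushNode C f₀ u₀ δ → X) → BushNode C f₀ u₀ δ → X :=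
    fun φ s => ∑ p ∈ t s, w s p • φ (N s p) with havg
  set Y : ℕ → BushNode C f₀ u₀ δ → X := fun n => avg^[n] BushNode.x with hY
  have hYsucc : ∀ n s, Y (n + 1) s = ∑ p ∈ t s, w s p • Y n (N s p) := fun n s => by
    simp only [hY, Function.iterate_succ_apply', havg]
  have hstep : ∀ n s, dist (Y n s) (Y (n + 1) s) ≤ η (s.lvl + n) := by
    intro n
    induction n with
    | zero =>
      intro s
      rw [hYsucc, dist_eq_norm]
      exact hwx s
    | succ n ih =>
      intro s
      rw [hYsucc, hYsucc, dist_eq_norm, ← Finset.sum_sub_distrib]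
      have h : ∀ p ∈ t s, ‖w s p • Y n (N s p) - w s p • Y (n + 1) (N s p)‖
          ≤ w s p * η (s.lvl + (n + 1)) := by
        intro p hp
        rw [← smul_sub, norm_smul, Real.norm_of_nonneg (hw0 s p hp), ← dist_eq_norm]
        refine mul_le_mul_of_nonneg_left ?_ (hw0 s p hp)
        have := ih (N s p)
        rwa [(hN s p hp).1, show s.lvl + 1 + n = s.lvl + (n + 1) by ring] at this
      refine (norm_sum_le_of_le _ h).trans ?_
      rw [← Finset.sum_mul, hw1, one_mul]
  have hstep' : ∀ s n, dist (Y n s) (Y (n + 1) s) ≤ r / 2 / 2 / 2 ^ n := by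
    intro s n
    refine (hstep n s).trans ?_
    simp only [hη]
    gcongr
    · norm_num
    · omega
  have hlim : ∀ s, ∃ a, Filter.Tendsto (fun n => Y n s) Filter.atTop (𝓝 a) := fun s =>
    cauchySeq_tendsto_of_complete (cauchySeq_of_le_geometric_two (hstep' s))
  choose y hy using hlim
  have hyavg : ∀ s, y s = ∑ p ∈ t s, w s p • y (N s p) := by
    intro s
    have h1 : Filter.Tendsto (fun n => Y (n + 1) s) Filter.atTop (𝓝 (y s)) :=
      (hy s).comp (Filter.tendsto_add_atTop_nat 1)
    have h2 : Filter.Tendsto (fun n => Y (n + 1) s) Filter.atTop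
        (𝓝 (∑ p ∈ t s, w s p • y (N s p))) := by
      simp only [hYsucc]
      exact tendsto_finsetSum _ fun p _ => (hy (N s p)).const_smul _
    exact tendsto_nhds_unique h1 h2
  have hYmem : ∀ n s, Y n s ∈ s.slice := by
    intro n
    induction n with
    | zero => exact fun s => s.x_mem_slice (fun n => (hδ n).2)
    | succ n ih =>
      intro s
      rw [hYsucc]
      exact (s.convex_slice hC).sum_mem (hw0 s) (hw1 s)
        fun p hp => (hN s p hp).2.1 (ih (N s p))
  refine ⟨BushNode C f₀ u₀ δ, root, BushNode.lvl, BushNode.slice, BushNode.x, y,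
    fun s => N s '' (t s : Set X), hroot, fun s => ?_⟩
  refine ⟨fun a ha => ha.1, s.convex_slice hC, ?_, ?_, ?_, ?_, ?_⟩
  · exact mem_closure_of_tendsto (hy s) (Filter.Eventually.of_forall fun n => hYmem n s)
  · rw [← dist_eq_norm]
    exact dist_le_of_le_geometric_two_of_tendsto₀ (hstep' s) (hy s)
  · exact (t s).finite_toSet.image _
  · rw [hyavg s]
    exact (convex_convexHull ℝ _).sum_mem (hw0 s) (hw1 s)
      fun p hp => subset_convexHull ℝ _ ⟨N s p, ⟨p, hp, rfl⟩, rfl⟩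
  · rintro _ ⟨p, hp, rfl⟩
    exact hN s p hp

/-! ### Dentability yields denting points -/

theorem sliceOf_eq (A : Set X) (f : X →L[ℝ] ℝ) (v : ℝ) :
    sliceOf A f (sSup ((fun y => f y) '' A) - v) = {x ∈ A | v < f x} := by
  simp [sliceOf]

theorem sSup_sub_pos {A : Set X} (hb : IsBounded A) {f : X →L[ℝ] ℝ} {v : ℝ}
    (hne : ∃ x ∈ A, v < f x) : 0 < sSup ((fun y => f y) '' A) - v := by
  obtain ⟨x, hx, hv⟩ := hne
  have hbdd : BddAbove ((fun y => f y) '' A) := (f.lipschitz.isBounded_image hb).bddAbove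
  linarith [le_csSup hbdd ⟨x, hx, rfl⟩]

/-- In a space all of whose bounded sets are dentable, every slice of a bounded convex set
contains slices of that set lying in arbitrarily small balls: otherwise the bush whose branching
is centred at the points of its own nodes is a bounded set without small slices. -/
theorem exists_small_subslice [CompleteSpace X]
    (hdent : ∀ A : Set X, A.Nonempty → IsBounded A → ∀ ε > 0,
      ∃ (f : X →L[ℝ] ℝ) (α : ℝ), 0 < α ∧ (sliceOf A f α).Nonempty ∧ diam (sliceOf A f α) < ε)
    {C : Set X} (hC : Convex ℝ C) (hb : IsBounded C) {f₀ : X →L[ℝ] ℝ} {u₀ : ℝ}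
    (hne : ∃ x ∈ C, u₀ < f₀ x) {ρ : ℝ} (hρ : 0 < ρ) :
    ∃ (g : X →L[ℝ] ℝ) (v : ℝ), (∃ x ∈ C, v < g x) ∧ (∀ x ∈ C, v < g x → u₀ < f₀ x) ∧
      ∃ z, ∀ x ∈ C, v < g x → ‖x - z‖ ≤ ρ := by
  by_contra! hcon
  obtain ⟨R, hR⟩ := hb.exists_norm_le
  set r := ρ / 2 with hrdef
  have hr : 0 < r := by positivity
  have h2r : 2 * r = ρ := by rw [hrdef]; ring
  obtain ⟨N, root, lvl, S, x, y, D, -, hN⟩ := exists_bush hC hr hR hne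
    (by rw [h2r]; exact hcon) (fun _ a => a)
  have hyR : ∀ s, y s ∈ closure C := fun s => closure_mono (hN s).1 (hN s).2.2.1
  have hbA : IsBounded (range y) := hb.closure.subset (by rintro _ ⟨s, rfl⟩; exact hyR s)
  obtain ⟨f, α, -, ⟨_, ⟨s, rfl⟩, hs⟩, hdiam⟩ :=
    hdent (range y) ⟨_, root, rfl⟩ hbA (r / 2) (by positivity)
  obtain ⟨-, -, -, hxy, -, hconv, hD⟩ := hN s
  obtain ⟨_, ⟨t, ht, rfl⟩, hft⟩ := exists_gt_of_mem_closure_convexHull (subset_closure hconv) hs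
  have hfar : r ≤ ‖y t - x s‖ := by
    have : closure (S t) ⊆ {a | r ≤ ‖a - x s‖} :=
      closure_minimal (fun a ha => ((hD t ht).2.2 a ha).le)
        (isClosed_le (by fun_prop) (by fun_prop))
    exact this (hN t).2.2.1
  have h1 : dist (y t) (y s) ≤ diam (sliceOf (range y) f α) :=
    dist_le_diam_of_mem (hbA.subset fun a ha => ha.1) ⟨⟨t, rfl⟩, hft⟩ ⟨⟨s, rfl⟩, hs⟩
  have h2 : ‖y t - x s‖ ≤ dist (y t) (y s) + ‖x s - y s‖ := by
    rw [← dist_eq_norm, ← dist_eq_norm, dist_comm (x s)]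
    exact dist_triangle _ _ _
  linarith

/-- A decreasing sequence of slices of `C` with diameters tending to `0` shrinks to a denting
point, and denting points are almost preserved extreme points. -/
theorem ape_nonempty_of_dentable [CompleteSpace X]
    (hdent : ∀ A : Set X, A.Nonempty → IsBounded A → ∀ ε > 0,
      ∃ (f : X →L[ℝ] ℝ) (α : ℝ), 0 < α ∧ (sliceOf A f α).Nonempty ∧ diam (sliceOf A f α) < ε)
    {C : Set X} (hCne : C.Nonempty) (hcl : IsClosed C) (hC : Convex ℝ C) (hb : IsBounded C) :
    (ape C).Nonempty := by
  -- slices of `C`, coded by a functional and a level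
  let T := {p : (X →L[ℝ] ℝ) × ℝ // ∃ x ∈ C, p.2 < p.1 x}
  have hstep : ∀ (n : ℕ) (p : T), ∃ q : T, (∀ x ∈ C, q.1.2 < q.1.1 x → p.1.2 < p.1.1 x) ∧
      ∃ z, ∀ x ∈ C, q.1.2 < q.1.1 x → ‖x - z‖ ≤ 1 / 2 / 2 / 2 ^ n := by
    intro n p
    obtain ⟨g, v, h1, h2, h3⟩ := exists_small_subslice hdent hC hb p.2
      (show (0 : ℝ) < 1 / 2 / 2 / 2 ^ n by positivity)
    exact ⟨⟨(g, v), h1⟩, h2, h3⟩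
  choose nxt hsub z hz using hstep
  obtain ⟨a, ha⟩ := hCne
  let p : ℕ → T := fun n =>
    Nat.rec ⟨((0 : X →L[ℝ] ℝ), (-1 : ℝ)), a, ha, by simp⟩ (fun n q => nxt n q) n
  have hp : ∀ n, p (n + 1) = nxt n (p n) := fun n => rfl
  choose x hxC hx using fun n => (p (n + 1)).2
  have hdist : ∀ n, ∀ b ∈ C, (p (n + 1)).1.2 < (p (n + 1)).1.1 b →
      dist (x n) b ≤ 1 / 2 / 2 ^ n := by
    intro n b hbC hbp
    have h1 := hz n (p n) (x n) (hxC n) (hx n)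
    have h2 := hz n (p n) b hbC hbp
    rw [← dist_eq_norm] at h1 h2
    have h3 := dist_triangle_right (x n) b (z n (p n))
    have h4 : (1 : ℝ) / 2 / 2 ^ n = 1 / 2 / 2 / 2 ^ n + 1 / 2 / 2 / 2 ^ n := by ring
    linarith
  have hcons : ∀ n, dist (x n) (x (n + 1)) ≤ 1 / 2 / 2 ^ n := fun n =>
    hdist n _ (hxC _) (hsub (n + 1) (p (n + 1)) _ (hxC _) (hx (n + 1)))
  obtain ⟨x₀, hx₀⟩ := cauchySeq_tendsto_of_complete (cauchySeq_of_le_geometric_two hcons)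
  refine ⟨x₀, hcl.mem_of_tendsto hx₀ (Filter.Eventually.of_forall hxC), fun U hU hxU => ?_⟩
  have hUn : IsOpen U := by
    obtain ⟨V, hV, rfl⟩ := isOpen_induced_iff.1 hU
    exact hV.preimage (by fun_prop)
  obtain ⟨e, he, heU⟩ := Metric.isOpen_iff.1 hUn x₀ hxU
  obtain ⟨n, hn⟩ := exists_pow_lt_of_lt_one (show 0 < e / 2 by positivity)
    (show (1 / 2 : ℝ) < 1 by norm_num)
  refine ⟨(p (n + 1)).1.1, _, sSup_sub_pos hb (p (n + 1)).2, ?_, ?_⟩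
  · rw [sliceOf_eq]
    exact ⟨x n, hxC n, hx n⟩
  · rw [sliceOf_eq]
    rintro b ⟨hbC, hbp⟩
    refine heU ?_
    rw [mem_ball]
    have h1 := hdist n b hbC hbp
    have h2 := dist_le_of_le_geometric_two_of_tendsto hcons hx₀ n
    have h3 := dist_triangle_left b x₀ (x n)
    have h4 : (1 : ℝ) / 2 ^ n = (1 / 2) ^ n := by rw [div_pow, one_pow]
    have h5 : (1 : ℝ) / 2 / 2 ^ n = (1 / 2) ^ n / 2 := by rw [← h4]; ring
    rw [h4] at h2
    rw [h5] at h1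
    have h6 : (0 : ℝ) < (1 / 2) ^ n := by positivity
    linarith

/-! ### A set without almost preserved extreme points -/

theorem exists_countable_of_mem_closure_convexHull {W : Set X} {x : X}
    (hx : x ∈ closure (convexHull ℝ W)) :
    ∃ Q : Set X, Q.Countable ∧ Q ⊆ W ∧ x ∈ closure (convexHull ℝ Q) := by
  obtain ⟨q, hq, hqx⟩ := mem_closure_iff_seq_limit.1 hx
  have h : ∀ n, ∃ t : Finset X, ↑t ⊆ W ∧ q n ∈ convexHull ℝ (t : Set X) := by
    intro n
    have := hq n
    rw [convexHull_eq_union_convexHull_finite_subsets] at this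
    simpa using this
  choose t htW hqt using h
  refine ⟨⋃ n, (t n : Set X), countable_iUnion fun n => (t n).countable_toSet,
    iUnion_subset htW, mem_closure_of_tendsto hqx (Filter.Eventually.of_forall fun n => ?_)⟩
  exact convexHull_mono (subset_iUnion (fun n => (t n : Set X)) n) (hqt n)

/-- Separable reduction: a bounded set without slices of diameter less than `ε` has a countable
nonempty subset without slices in balls of radius `ε / 6`. A point `x` is in the closed convex
hull of the points at distance more than `ε / 3` from it, hence of countably many of them; the subset is
obtained by closing a singleton under this choice. -/
theorem exists_countable_nondentable {A : Set X} (hne : A.Nonempty) (hb : IsBounded A) {ε : ℝ}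
    (hε : 0 < ε) (h : ∀ (f : X →L[ℝ] ℝ) (α : ℝ), 0 < α → (sliceOf A f α).Nonempty →
      ε ≤ diam (sliceOf A f α)) :
    ∃ B : Set X, B.Countable ∧ B.Nonempty ∧ B ⊆ A ∧ ∀ (g : X →L[ℝ] ℝ) (v : ℝ),
      (∃ x ∈ B, v < g x) → ∀ z, ∃ x ∈ B, v < g x ∧ ε / 6 < ‖x - z‖ := by
  have hQ : ∀ x : X, ∃ Q : Set X, Q.Countable ∧ (x ∈ A → Q ⊆ A \ closedBall x (ε / 3) ∧
      x ∈ closure (convexHull ℝ Q)) := by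
    intro x
    by_cases hxA : x ∈ A
    · have hx : x ∈ closure (convexHull ℝ (A \ closedBall x (ε / 3))) := by
        by_contra hx
        obtain ⟨f, u, hf, hux⟩ := geometric_hahn_banach_closed_point
          (convex_convexHull ℝ (A \ closedBall x (ε / 3))).closure isClosed_closure hx
        have h1 := h f _ (sSup_sub_pos hb ⟨x, hxA, hux⟩)
          (by rw [sliceOf_eq]; exact ⟨x, hxA, hux⟩)
        rw [sliceOf_eq] at h1
        have h2 : {y ∈ A | u < f y} ⊆ closedBall x (ε / 3) := by
          rintro y ⟨hyA, hy⟩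
          by_contra hyb
          exact absurd (hf y (subset_closure (subset_convexHull ℝ _ ⟨hyA, hyb⟩)))
            (not_lt.2 hy.le)
        have h3 := (diam_mono h2 isBounded_closedBall).trans
          (diam_closedBall (x := x) (show 0 ≤ ε / 3 by positivity))
        linarith
      obtain ⟨Q, hQ1, hQ2, hQ3⟩ := exists_countable_of_mem_closure_convexHull hx
      exact ⟨Q, hQ1, fun _ => ⟨hQ2, hQ3⟩⟩
    · exact ⟨∅, countable_empty, fun h => absurd h hxA⟩
  choose Q hQc hQ using hQ
  obtain ⟨a, ha⟩ := hne
  let G : ℕ → Set X := fun n => Nat.rec {a} (fun _ S => ⋃ x ∈ S, Q x) n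
  have hGs : ∀ n, G (n + 1) = ⋃ x ∈ G n, Q x := fun n => rfl
  have hGc : ∀ n, (G n).Countable := by
    intro n
    induction n with
    | zero => exact countable_singleton a
    | succ n ih => rw [hGs]; exact ih.biUnion fun x _ => hQc x
  have hGA : ∀ n, G n ⊆ A := by
    intro n
    induction n with
    | zero => exact singleton_subset_iff.2 ha
    | succ n ih =>
      rw [hGs]
      exact iUnion₂_subset fun x hx => ((hQ x (ih hx)).1).trans sdiff_subset
  refine ⟨⋃ n, G n, countable_iUnion hGc, ⟨a, mem_iUnion.2 ⟨0, rfl⟩⟩, iUnion_subset hGA, ?_⟩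
  rintro g v ⟨x, hx, hvx⟩ z
  obtain ⟨n, hxn⟩ := mem_iUnion.1 hx
  obtain ⟨hQ1, hQ2⟩ := hQ x (hGA n hxn)
  obtain ⟨q, hq, hvq⟩ := exists_gt_of_mem_closure_convexHull hQ2 hvx
  by_contra! hcon
  have h1 := hcon x hx hvx
  have h2 := hcon q (mem_iUnion.2 ⟨n + 1, by rw [hGs]; exact mem_biUnion hxn hq⟩) hvq
  refine (hQ1 hq).2 ?_
  rw [mem_closedBall]
  rw [← dist_eq_norm] at h1 h2
  linarith [dist_triangle_right q x z]

/-- A bounded set without small slices yields a closed bounded convex set without almost preserved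
extreme points, namely the closed convex hull of a bush whose slices at level `n + 1` avoid the
ball about the `n`-th term of a dense sequence. An almost preserved extreme point would lie in one
of the finitely many closed slices of each level. -/
theorem exists_ape_empty [CompleteSpace X] {A : Set X} (hne : A.Nonempty) (hb : IsBounded A)
    {ε : ℝ} (hε : 0 < ε) (h : ∀ (f : X →L[ℝ] ℝ) (α : ℝ), 0 < α → (sliceOf A f α).Nonempty →
      ε ≤ diam (sliceOf A f α)) :
    ∃ C : Set X, C.Nonempty ∧ IsClosed C ∧ Convex ℝ C ∧ IsBounded C ∧ ¬ (ape C).Nonempty := by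
  obtain ⟨B, hBc, ⟨b, hbB⟩, hBA, hB⟩ := exists_countable_nondentable hne hb hε h
  have hCb : IsBounded (convexHull ℝ B) := isBounded_convexHull.2 (hb.subset hBA)
  obtain ⟨R, hR⟩ := hCb.exists_norm_le
  have hsep : TopologicalSpace.IsSeparable (Submodule.span ℝ B : Set X) := hBc.isSeparable.span
  obtain ⟨Z, hZc, hZ⟩ := hsep
  have hZne : Z.Nonempty := by
    by_contra hZe
    rw [not_nonempty_iff_eq_empty] at hZe
    rw [hZe, closure_empty] at hZ
    exact hZ (Submodule.zero_mem (Submodule.span ℝ B))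
  obtain ⟨z, rfl⟩ := hZc.exists_eq_range hZne
  set r := ε / 12 with hrdef
  have hr : 0 < r := by positivity
  obtain ⟨N, root, lvl, S, x, y, D, hroot, hN⟩ := exists_bush (f₀ := (0 : X →L[ℝ] ℝ)) (u₀ := -1)
    (convex_convexHull ℝ B) hr hR ⟨b, subset_convexHull ℝ B hbB, by simp⟩
    (by
      rintro g v ⟨q, hq, hvq⟩ - c
      obtain ⟨p, hp, hvp⟩ := exists_gt_of_mem_closure_convexHull (subset_closure hq) hvq
      obtain ⟨p', hp', hv', hfar⟩ := hB g v ⟨p, hp, hvp⟩ c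
      exact ⟨p', subset_convexHull ℝ B hp', hv', by rw [hrdef]; linarith⟩)
    (fun n _ => z n)
  -- the nodes of level `n` that descend from the root
  let T : ℕ → Set N := fun n => Nat.rec {root} (fun _ W => ⋃ s ∈ W, D s) n
  have hTs : ∀ n, T (n + 1) = ⋃ s ∈ T n, D s := fun n => rfl
  have hTfin : ∀ n, (T n).Finite := by
    intro n
    induction n with
    | zero => exact finite_singleton root
    | succ n ih => rw [hTs]; exact ih.biUnion fun s _ => (hN s).2.2.2.2.1
  have hTlvl : ∀ n, ∀ s ∈ T n, lvl s = n := by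
    intro n
    induction n with
    | zero => intro s hs; rw [mem_singleton_iff.1 hs, hroot]
    | succ n ih =>
      intro t ht
      rw [hTs] at ht
      obtain ⟨s, hs, hts⟩ := mem_iUnion₂.1 ht
      rw [((hN s).2.2.2.2.2.2 t hts).1, ih s hs]
  have hup : ∀ (f : X →L[ℝ] ℝ) (v : ℝ) (m k : ℕ), (∃ s ∈ T m, v < f (y s)) →
      ∃ s ∈ T (m + k), v < f (y s) := by
    intro f v m k hm
    induction k with
    | zero => exact hm
    | succ k ih =>
      obtain ⟨s, hs, hv⟩ := ih
      obtain ⟨_, ⟨t, ht, rfl⟩, hvt⟩ :=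
        exists_gt_of_mem_closure_convexHull (subset_closure (hN s).2.2.2.2.2.1) hv
      exact ⟨t, by rw [← add_assoc, hTs]; exact mem_biUnion hs ht, hvt⟩
  have hdown : ∀ (n k : ℕ), ∀ t ∈ T (n + k), ∃ s ∈ T n, S t ⊆ S s := by
    intro n k
    induction k with
    | zero => exact fun t ht => ⟨t, ht, Subset.rfl⟩
    | succ k ih =>
      intro t ht
      rw [← add_assoc, hTs] at ht
      obtain ⟨t', ht', htt'⟩ := mem_iUnion₂.1 ht
      obtain ⟨s, hs, hss⟩ := ih t' ht'
      exact ⟨s, hs, (((hN t').2.2.2.2.2.2 t htt').2.1).trans hss⟩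
  have hysub : y '' (⋃ n, T n) ⊆ closure (convexHull ℝ B) := by
    rintro _ ⟨s, -, rfl⟩
    exact closure_mono (hN s).1 (hN s).2.2.1
  set C' := closure (convexHull ℝ (y '' (⋃ n, T n))) with hC'
  have hC'sub : C' ⊆ closure (convexHull ℝ B) :=
    closure_minimal (convexHull_min hysub (convex_convexHull ℝ B).closure) isClosed_closure
  refine ⟨C', ⟨y root, subset_closure (subset_convexHull ℝ _ ⟨root, mem_iUnion.2 ⟨0, rfl⟩, rfl⟩)⟩,
    isClosed_closure, (convex_convexHull ℝ _).closure, hCb.closure.subset hC'sub, ?_⟩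
  rintro ⟨x₀, hx₀, hape⟩
  have hx₀Z : x₀ ∈ closure (range z) := by
    have h1 : convexHull ℝ B ⊆ closure (range z) :=
      (convexHull_min Submodule.subset_span (Submodule.span ℝ B).convex).trans hZ
    exact closure_minimal h1 isClosed_closure (hC'sub hx₀)
  obtain ⟨_, ⟨n, rfl⟩, hn⟩ := Metric.mem_closure_iff.1 hx₀Z r hr
  have hfar : ∀ t ∈ T (n + 1), x₀ ∉ closure (S t) := by
    intro t ht hxt
    rw [hTs] at ht
    obtain ⟨s, hs, hts⟩ := mem_iUnion₂.1 ht
    have h1 : closure (S t) ⊆ {a | r ≤ ‖a - z n‖} :=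
      closure_minimal (fun a ha => by
        have := ((hN s).2.2.2.2.2.2 t hts).2.2 a ha
        rw [hTlvl n s hs] at this
        exact this.le) (isClosed_le (by fun_prop) (by fun_prop))
    have h2 : r ≤ ‖x₀ - z n‖ := h1 hxt
    rw [← dist_eq_norm] at h2
    linarith
  have hHB : ∀ t, ∃ (g : X →L[ℝ] ℝ) (v : ℝ), t ∈ T (n + 1) →
      (∀ a ∈ closure (S t), g a < v) ∧ v < g x₀ := by
    intro t
    by_cases ht : t ∈ T (n + 1)
    · obtain ⟨g, v, h1, h2⟩ := geometric_hahn_banach_closed_point (hN t).2.1.closure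
        isClosed_closure (hfar t ht)
      exact ⟨g, v, fun _ => ⟨h1, h2⟩⟩
    · exact ⟨0, 0, fun h => absurd h ht⟩
  choose g v hgv using hHB
  obtain ⟨f, α, -, ⟨q, hq, hfq⟩, hsl⟩ := hape (⋂ t ∈ T (n + 1), {a | v t < g t a})
    (by
      refine @Set.Finite.isOpen_biInter _ _ (weakTop X) _ _ (hTfin (n + 1)) fun t _ => ?_
      refine isOpen_induced_iff.2 ⟨{φ | v t < φ (g t)}, ?_, rfl⟩
      exact isOpen_lt continuous_const (continuous_apply (g t)))
    (mem_iInter₂.2 fun t ht => (hgv t ht).2)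
  obtain ⟨_, ⟨s, hs, rfl⟩, hfs⟩ := exists_gt_of_mem_closure_convexHull hq hfq
  obtain ⟨m, hsm⟩ := mem_iUnion.1 hs
  obtain ⟨t, ht, hft⟩ := hup f _ m (n + 1) ⟨s, hsm, hfs⟩
  have hyU := hsl
    ⟨subset_closure (subset_convexHull ℝ _ ⟨t, mem_iUnion.2 ⟨m + (n + 1), ht⟩, rfl⟩), hft⟩
  obtain ⟨s', hs', hts'⟩ := hdown (n + 1) m t (by rwa [add_comm])
  have h1 := (hgv s' hs').1 (y t) (closure_mono hts' (hN t).2.2.1)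
  have h2 : v s' < g s' (y t) := mem_iInter₂.1 hyU s' hs'
  exact lt_asymm h1 h2

end Bush

/-- A real Banach space `X` has the Radon–Nikodým property (in its geometric
form: every nonempty bounded subset admits nonempty slices of arbitrarily small diameter) if
and only if every nonempty closed, convex and bounded subset of `X` has an almost preserved
extreme point. -/
theorem rnp_iff_ape_nonempty {X : Type*} [NormedAddCommGroup X] [NormedSpace ℝ X]
    [CompleteSpace X] :
    (∀ A : Set X, A.Nonempty → Bornology.IsBounded A → ∀ ε > 0,
      ∃ (f : X →L[ℝ] ℝ) (α : ℝ), 0 < α ∧ (sliceOf A f α).Nonempty ∧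
        Metric.diam (sliceOf A f α) < ε) ↔
    (∀ C : Set X, C.Nonempty → IsClosed C → Convex ℝ C → Bornology.IsBounded C →
      (ape C).Nonempty) := by
  constructor
  · intro h C hne hcl hC hb
    exact ape_nonempty_of_dentable h hne hcl hC hb
  · intro h A hne hb ε hε
    by_contra! hcon
    obtain ⟨C, h1, h2, h3, h4, h5⟩ := exists_ape_empty hne hb hε hcon
    exact h5 (h C h1 h2 h3 h4)
end
end

section
/- Let X be a real Banach space. The following are equivalent: (1) X has the Radon–Nikodým property, in its geometric form: for every nonempty bounded subset A of X and every ε > 0 there exist f ∈ X* and α > 0 such that the slice S(A,f,α) is nonempty and has diameter less than ε; (2) the closed unit ball of every equivalent norm on X has an almost preserved extreme point; equivalently, every bounded, closed, convex and symmetric (B = −B) subset B of X with 0 in its norm-interior satisfies ape(B) ≠ ∅. -/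
/-!
Both implications rest on one construction. Call a bounded sequence of levels `K n` a bush if every
node is a convex combination of nodes of the next level and, for each `n`, finitely many functionals
of norm at most `1` separate all nodes beyond level `n`, with a fixed gap, from the symmetric convex
hull of the nodes up to level `n` (`IsBush`). If no slice of a bounded convex set `C` inside a given
slice `T₀` lies in a ball of radius `3 * δ`, then a bush exists (`exists_bush`).

The construction uses two consequences of the estimate `infDist_le_of_meets`, a version of the
superlemma. First, for any finite set, every slice inside `T₀` has a subslice separated with gap `δ`
from the symmetric hull of that set (`exists_slice_separated`). Second, every slice `T` contains
points that are arbitrarily well approximated by convex combinations of any subset of `T` meeting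
all subslices of `T` (`sliceCore_nonempty`). Hence a node is almost an average of points from
subslices separated from everything built so far, and small translations with summable norms make
the averages exact.

Under the Radon–Nikodým property there is no bush: from a node in a slice one can pass to a node of
the next level in the same slice, so no slice of the union of the levels has small diameter.
Therefore every slice of a ball `B` contains slices in arbitrarily small balls, and a nested
sequence of slices shrinks to an almost preserved extreme point (`ape_nonempty_of_small_subslices`).

Conversely, if all slices of `A` have diameter at least `ε`, the convex hull of `A` carries a bush.
Adding a small ball to the symmetric convex hull of the bush and taking the closure gives a unit
ball `B`. A point of `B` is close to the symmetric hull of finitely many levels, hence has a weak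
neighbourhood that avoids the small balls around all later nodes and their negatives; every slice
of `B` contains a point of such a ball, so `B` has no almost preserved extreme point
(`IsBush.exists_ball`).
-/

open Set Metric Topology Bornology

noncomputable section

section Construction

variable {X : Type*} [NormedAddCommGroup X] [NormedSpace ℝ X]

/-! ### Slices -/

/-- `T` is a nonempty slice of `C`, written with a threshold `s` in place of the distance to the
supremum. -/
def IsSlice (C T : Set X) : Prop :=
  T.Nonempty ∧ ∃ (f : X →L[ℝ] ℝ) (s : ℝ), T = {x ∈ C | s < f x}

lemma IsSlice.subset {C T : Set X} (h : IsSlice C T) : T ⊆ C := by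
  obtain ⟨-, f, s, rfl⟩ := h
  exact fun x hx => hx.1

lemma IsSlice.convex {C T : Set X} (h : IsSlice C T) (hC : Convex ℝ C) : Convex ℝ T := by
  obtain ⟨-, f, s, rfl⟩ := h
  exact hC.inter (convex_halfSpace_gt f.isLinear s)

lemma isSlice_self {C : Set X} (h : C.Nonempty) : IsSlice C C :=
  ⟨h, 0, -1, by ext x; simp⟩

lemma bddAbove_image {C : Set X} (hC : IsBounded C) (f : X →L[ℝ] ℝ) :
    BddAbove ((fun y => f y) '' C) := by
  obtain ⟨R, hR⟩ := hC.exists_norm_le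
  refine ⟨‖f‖ * R, ?_⟩
  rintro _ ⟨y, hy, rfl⟩
  exact (le_abs_self _).trans ((f.le_opNorm y).trans
    (mul_le_mul_of_nonneg_left (hR y hy) (norm_nonneg _)))

lemma IsSlice.exists_sliceOf {C T : Set X} (h : IsSlice C T) (hC : IsBounded C) :
    ∃ (f : X →L[ℝ] ℝ) (α : ℝ), 0 < α ∧ T = sliceOf C f α := by
  obtain ⟨⟨x, hx⟩, f, s, rfl⟩ := h
  refine ⟨f, sSup ((fun y => f y) '' C) - s, ?_, ?_⟩
  · have := le_csSup (bddAbove_image hC f) (mem_image_of_mem _ hx.1)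
    have h2 := hx.2
    linarith
  · simp [sliceOf]

/-! ### Sets meeting every slice, and separated subslices -/

lemma infDist_convex_comb {P : Set X} (hP : Convex ℝ P) (hne : P.Nonempty) {x y : X} {a b : ℝ}
    (ha : 0 ≤ a) (hb : 0 ≤ b) (hab : a + b = 1) :
    infDist (a • x + b • y) P ≤ a * infDist x P + b * infDist y P := by
  refine le_of_forall_pos_le_add fun τ hτ => ?_
  obtain ⟨p, hp, hxp⟩ := (infDist_lt_iff hne).1 (lt_add_of_pos_right (infDist x P) hτ)
  obtain ⟨q, hq, hyq⟩ := (infDist_lt_iff hne).1 (lt_add_of_pos_right (infDist y P) hτ)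
  have h1 := infDist_le_dist_of_mem (x := a • x + b • y) (hP hp hq ha hb hab)
  have h2 : dist (a • x + b • y) (a • p + b • q) ≤ a * dist x p + b * dist y q := by
    refine (dist_add_add_le _ _ _ _).trans ?_
    rw [dist_smul₀, dist_smul₀, Real.norm_of_nonneg ha, Real.norm_of_nonneg hb]
  calc _ ≤ a * dist x p + b * dist y q := h1.trans h2
    _ ≤ a * (infDist x P + τ) + b * (infDist y P + τ) := by gcongr
    _ = a * infDist x P + b * infDist y P + (a + b) * τ := by ring
    _ = _ := by rw [hab, one_mul]

/-- Quantitative core of the argument. The set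
`{c | infDist c P + M * f c ≤ δ + M * m}` is closed and convex; if it contains a subset `G` of `C`
meeting every slice of `C`, then it contains `C`. Hence points of `C` at which `f` is almost
maximal are almost within `δ` of `P`. -/
lemma infDist_le_of_meets {C G P : Set X} (f : X →L[ℝ] ℝ) (hP : Convex ℝ P) (hne : P.Nonempty)
    {m s δ M : ℝ} (hM : 0 ≤ M) (hδ : 0 ≤ δ) (hfm : ∀ c ∈ C, f c ≤ m)
    (hG : ∀ T, IsSlice C T → (T ∩ G).Nonempty)
    (h1 : ∀ c ∈ G, c ∈ C ∧ (infDist c P ≤ δ ∨ (f c ≤ s ∧ infDist c P ≤ M * (m - s)))) :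
    ∀ y ∈ C, infDist y P ≤ δ + M * (m - f y) := by
  intro y hy
  set Z : Set X := {c | infDist c P + M * f c ≤ δ + M * m} with hZ
  have hZconv : Convex ℝ Z := by
    intro x hx z hz a b ha hb hab
    have h := infDist_convex_comb hP hne (x := x) (y := z) ha hb hab
    simp only [hZ, mem_ofPred_eq, map_add, map_smul, smul_eq_mul] at hx hz ⊢
    have e1 := mul_le_mul_of_nonneg_left hx ha
    have e2 := mul_le_mul_of_nonneg_left hz hb
    have e3 : a * (δ + M * m) + b * (δ + M * m) = δ + M * m := by rw [← add_mul, hab, one_mul]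
    nlinarith
  have hZcl : IsClosed Z := by
    refine isClosed_le ?_ continuous_const
    exact (continuous_infDist_pt P).add (continuous_const.mul f.continuous)
  have hGZ : G ⊆ Z := by
    intro c hc
    obtain ⟨hcC, h | ⟨h, h'⟩⟩ := h1 c hc
    · have := mul_le_mul_of_nonneg_left (hfm c hcC) hM
      simp only [hZ, mem_ofPred_eq]; linarith
    · have := mul_le_mul_of_nonneg_left h hM
      simp only [hZ, mem_ofPred_eq]; nlinarith
  have hyZ : y ∈ Z := by
    by_contra hyZ
    obtain ⟨g, u, hgu, huy⟩ := geometric_hahn_banach_closed_point hZconv hZcl hyZ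
    obtain ⟨c, hc, hcG⟩ := hG {x ∈ C | u < g x} ⟨⟨y, hy, huy⟩, g, u, rfl⟩
    exact lt_asymm hc.2 (hgu c (hGZ hcG))
  simp only [hZ, mem_ofPred_eq] at hyZ
  linarith

/-- The points of the slice `T` of `C` that are `η`-approximated by convex combinations of any
`K ⊆ T` meeting all subslices of `T`. -/
def sliceCore (C T : Set X) (η : ℝ) : Set X :=
  {y ∈ T | ∀ K ⊆ T, (∀ U, IsSlice C U → U ⊆ T → (U ∩ K).Nonempty) →
    ∃ z ∈ convexHull ℝ K, ‖y - z‖ < η}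

/-- The points of `T` close to the top belong to the core: in a convex combination of points of
`K ∪ (C \ T)` close to such a point, the weight of `C \ T` is negligible. -/
lemma sliceCore_nonempty {C T : Set X} (hC : IsBounded C) (hT : IsSlice C T) {η : ℝ}
    (hη : 0 < η) : (sliceCore C T η).Nonempty := by
  have hT' := hT
  obtain ⟨⟨x, hx⟩, f, s, rfl⟩ := hT
  set T := {x ∈ C | s < f x}
  obtain ⟨R, hR0, hR⟩ := hC.exists_pos_norm_le
  have hbdd := bddAbove_image hC f
  set m := sSup ((fun y => f y) '' C) with hm
  have hfm : ∀ c ∈ C, f c ≤ m := fun c hc => le_csSup hbdd (mem_image_of_mem _ hc)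
  have hsm : s < m := hx.2.trans_le (hfm x hx.1)
  set M := 2 * R / (m - s) with hMdef
  have hM : 0 < M := div_pos (by linarith) (by linarith)
  have hMs : M * (m - s) = 2 * R := by
    rw [hMdef]; field_simp [sub_ne_zero.2 hsm.ne']
  have hlt : max s (m - η / M) < m := max_lt hsm (by have := div_pos hη hM; linarith)
  obtain ⟨_, ⟨y, hyC, rfl⟩, hy⟩ := exists_lt_of_lt_csSup ⟨_, mem_image_of_mem _ hx.1⟩ hlt
  have hy' : max s (m - η / M) < f y := hy
  refine ⟨y, ⟨hyC, (le_max_left _ _).trans_lt hy'⟩, fun K hKT hK => ?_⟩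
  obtain ⟨k, -, hk⟩ := hK T hT' subset_rfl
  have hkH : k ∈ convexHull ℝ K := subset_convexHull ℝ K hk
  have key := infDist_le_of_meets (C := C) (G := K ∪ C \ T) (s := s) f (convex_convexHull ℝ K)
    ⟨k, hkH⟩ hM.le le_rfl hfm ?_ ?_ y hyC
  · have h2 : m - f y < η / M := by linarith [le_max_right s (m - η / M)]
    have h3 : M * (m - f y) < η := by rw [lt_div_iff₀ hM] at h2; linarith
    obtain ⟨z, hz, hyz⟩ := (infDist_lt_iff (x := y) (r := η) ⟨k, hkH⟩).1 (by linarith)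
    exact ⟨z, hz, by rwa [← dist_eq_norm]⟩
  · intro U hU
    by_cases hUT : U ⊆ T
    · exact (hK U hU hUT).mono (inter_subset_inter_right _ subset_union_left)
    · obtain ⟨u, huU, huT⟩ := not_subset.1 hUT
      exact ⟨u, huU, Or.inr ⟨hU.subset huU, huT⟩⟩
  · rintro c (hc | hc)
    · exact ⟨(hKT hc).1, Or.inl (infDist_zero_of_mem (subset_convexHull ℝ K hc)).le⟩
    · refine ⟨hc.1, Or.inr ⟨not_lt.1 fun h => hc.2 ⟨hc.1, h⟩, ?_⟩⟩
      rw [hMs]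
      refine (infDist_le_dist_of_mem hkH).trans ?_
      rw [dist_eq_norm]
      linarith [norm_sub_le c k, hR c hc.1, hR k (hKT hk).1]

/-- A form of the superlemma: if no subslice of `T` lies in the ball of radius `3 * δ` around `p`,
some subslice misses the ball of radius `2 * δ`. -/
lemma exists_slice_avoiding_ball {C T : Set X} (hC : IsBounded C) (hT : IsSlice C T) {δ : ℝ}
    (hδ : 0 < δ) (p : X)
    (hbig : ∀ U, IsSlice C U → U ⊆ T → ¬ U ⊆ closedBall p (3 * δ)) :
    ∃ U, IsSlice C U ∧ U ⊆ T ∧ Disjoint U (closedBall p (2 * δ)) := by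
  by_contra! hcon
  obtain ⟨⟨x, hx⟩, f, s, rfl⟩ := hT
  set T := {x ∈ C | s < f x}
  obtain ⟨R, hR0, hR⟩ := hC.exists_pos_norm_le
  have hbdd := bddAbove_image hC f
  set m := sSup ((fun y => f y) '' C) with hm
  have hfm : ∀ c ∈ C, f c ≤ m := fun c hc => le_csSup hbdd (mem_image_of_mem _ hc)
  have hsm : s < m := hx.2.trans_le (hfm x hx.1)
  set M := (R + ‖p‖) / (m - s) with hMdef
  have hM : 0 < M := div_pos (by positivity) (by linarith)
  have hMs : M * (m - s) = R + ‖p‖ := by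
    rw [hMdef]; field_simp [sub_ne_zero.2 hsm.ne']
  have hlt : max s (m - δ / M) < m := max_lt hsm (by have := div_pos hδ hM; linarith)
  have key := infDist_le_of_meets (C := C) (G := (C ∩ closedBall p (2 * δ)) ∪ C \ T) (s := s)
    (δ := 2 * δ) f (convex_singleton p) (singleton_nonempty p) hM.le (by positivity) hfm ?_ ?_
  · obtain ⟨_, ⟨y, hyC, rfl⟩, hy⟩ := exists_lt_of_lt_csSup ⟨_, mem_image_of_mem _ hx.1⟩ hlt
    refine hbig {x ∈ C | max s (m - δ / M) < f x} ⟨⟨y, hyC, hy⟩, f, _, rfl⟩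
      (fun z hz => ⟨hz.1, (le_max_left _ _).trans_lt hz.2⟩) fun z hz => ?_
    have h1 := key z hz.1
    rw [infDist_singleton] at h1
    have h2 : m - f z < δ / M := by linarith [le_max_right s (m - δ / M), hz.2]
    have h3 : M * (m - f z) < δ := by rw [lt_div_iff₀ hM] at h2; linarith
    rw [mem_closedBall]; linarith
  · intro U hU
    by_cases hUT : U ⊆ T
    · obtain ⟨u, hu, hup⟩ := not_disjoint_iff.1 (hcon U hU hUT)
      exact ⟨u, hu, Or.inl ⟨hU.subset hu, hup⟩⟩
    · obtain ⟨u, huU, huT⟩ := not_subset.1 hUT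
      exact ⟨u, huU, Or.inr ⟨hU.subset huU, huT⟩⟩
  · rintro c (hc | hc)
    · exact ⟨hc.1, Or.inl (by rw [infDist_singleton]; exact hc.2)⟩
    · refine ⟨hc.1, Or.inr ⟨not_lt.1 fun h => hc.2 ⟨hc.1, h⟩, ?_⟩⟩
      rw [hMs, infDist_singleton, dist_eq_norm]
      linarith [norm_sub_le c p, hR c hc.1]

lemma exists_slice_avoiding_finite {C T : Set X} (hC : IsBounded C) (hT : IsSlice C T) {δ : ℝ}
    (hδ : 0 < δ) (hbig : ∀ U, IsSlice C U → U ⊆ T → ∀ p, ¬ U ⊆ closedBall p (3 * δ))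
    {P : Set X} (hP : P.Finite) :
    ∃ U, IsSlice C U ∧ U ⊆ T ∧ ∀ p ∈ P, Disjoint U (closedBall p (2 * δ)) := by
  induction P, hP using Set.Finite.induction_on with
  | empty => exact ⟨T, hT, subset_rfl, by simp⟩
  | @insert p P _ _ ih =>
    obtain ⟨U, hU, hUT, hUP⟩ := ih
    obtain ⟨V, hV, hVU, hVp⟩ := exists_slice_avoiding_ball hC hU hδ p
      fun W hW hWU => hbig W hW (hWU.trans hUT) p
    refine ⟨V, hV, hVU.trans hUT, ?_⟩
    rintro q (rfl | hq)
    · exact hVp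
    · exact (hUP q hq).mono_left hVU

/-- If no subslice of `T` lies in a ball of radius `3 * δ`, then for every finite set `F` some
subslice of `T` lies in a half-space at distance at least `δ` from the symmetric convex hull
of `F`. -/
lemma exists_slice_separated {C T : Set X} (hC : IsBounded C) (hCc : Convex ℝ C)
    (hT : IsSlice C T) {δ : ℝ}
    (hδ : 0 < δ) (hbig : ∀ U, IsSlice C U → U ⊆ T → ∀ p, ¬ U ⊆ closedBall p (3 * δ))
    {F : Set X} (hF : F.Finite) :
    ∃ U, IsSlice C U ∧ U ⊆ T ∧
      ∃ φ : X →L[ℝ] ℝ, ‖φ‖ ≤ 1 ∧ ∀ z ∈ U, ∀ e ∈ F, |φ e| + δ ≤ φ z := by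
  rcases F.eq_empty_or_nonempty with rfl | hFne
  · exact ⟨T, hT, subset_rfl, 0, by simp, by simp⟩
  set E : Set X := convexHull ℝ (F ∪ -F) with hE
  have hEc : IsCompact E := (hF.union hF.neg).isCompact_convexHull (𝕜 := ℝ)
  obtain ⟨P, -, hPfin, hPcov⟩ := hEc.finite_cover_balls hδ
  obtain ⟨U, hU, hUT, hUP⟩ := exists_slice_avoiding_finite hC hT hδ hbig hPfin
  refine ⟨U, hU, hUT, ?_⟩
  have hdisj : Disjoint (thickening δ E) U := by
    rw [Set.disjoint_left]
    intro x hx hxU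
    obtain ⟨e, he, hxe⟩ := mem_thickening_iff.1 hx
    obtain ⟨p, hp, hep⟩ := mem_iUnion₂.1 (hPcov he)
    refine Set.disjoint_left.1 (hUP p hp) hxU ?_
    rw [mem_closedBall]
    rw [mem_ball] at hep
    linarith [dist_triangle x e p]
  obtain ⟨ψ, u, h1, h2⟩ := geometric_hahn_banach_open
    ((convex_convexHull ℝ (F ∪ -F)).thickening δ) isOpen_thickening (hU.convex hCc) hdisj
  -- testing `ψ` on the ball of radius `δ` around `e` gives the gap `δ * ‖ψ‖`
  have h3 : ∀ e ∈ E, ψ e + δ * ‖ψ‖ ≤ u := by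
    intro e he
    have hb : ‖ψ‖ ≤ (u - ψ e) / δ := by
      have hb0 : ∀ b : X, ‖b‖ < δ → ψ b ≤ u - ψ e := by
        intro b hb
        have := h1 (e + b) (mem_thickening_iff.2 ⟨e, he, by simpa [dist_eq_norm] using hb⟩)
        rw [map_add] at this; linarith
      have h0 : 0 ≤ u - ψ e := by simpa using hb0 0 (by simpa using hδ)
      refine ψ.opNorm_le_bound (div_nonneg h0 hδ.le) fun x => ?_
      have hx : ∀ x : X, ψ x ≤ (u - ψ e) / δ * ‖x‖ := by
        intro x
        rcases eq_or_ne x 0 with rfl | hx0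
        · simp
        have hxn : 0 < ‖x‖ := norm_pos_iff.2 hx0
        refine le_of_forall_pos_le_add fun τ hτ => ?_
        by_contra! hlt
        have hpos : 0 < ψ x := lt_of_le_of_lt (by positivity) hlt
        -- scale `x` to a vector of norm just below `δ`
        set t := (u - ψ e) / ψ x with ht
        have hψ : (u - ψ e) / δ * ‖x‖ < ψ x := by linarith
        have : (u - ψ e) * ‖x‖ < δ * ψ x := by
          rw [div_mul_eq_mul_div, div_lt_iff₀ hδ] at hψ; linarith
        have ht2 : t * ‖x‖ < δ := by
          rw [ht, div_mul_eq_mul_div, div_lt_iff₀ hpos]; exact this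
        obtain ⟨t', htt', ht'⟩ := exists_between ((lt_div_iff₀ hxn).2 ht2)
        have ht0 : 0 ≤ t := div_nonneg h0 hpos.le
        have := hb0 (t' • x) (by
          rw [norm_smul, Real.norm_of_nonneg (ht0.trans htt'.le)]
          exact (lt_div_iff₀ hxn).1 ht')
        rw [map_smul, smul_eq_mul] at this
        have h5 : t * ψ x = u - ψ e := by rw [ht]; field_simp
        nlinarith
      rw [Real.norm_eq_abs, abs_le]
      have := hx (-x)
      rw [map_neg, norm_neg] at this
      exact ⟨by linarith, hx x⟩
    rw [le_div_iff₀ hδ] at hb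
    linarith
  have hFE : ∀ e ∈ F, e ∈ E ∧ -e ∈ E := fun e he =>
    ⟨subset_convexHull ℝ _ (Or.inl he), subset_convexHull ℝ _ (Or.inr (by simpa using he))⟩
  have hψ : 0 < ‖ψ‖ := by
    obtain ⟨e, he⟩ := hFne
    obtain ⟨z, hz⟩ := hU.1
    refine norm_pos_iff.2 ?_
    rintro rfl
    have := h1 e (self_subset_thickening hδ E (hFE e he).1)
    have := h2 z hz
    simp at *
    linarith
  refine ⟨‖ψ‖⁻¹ • ψ, ?_, fun z hz e he => ?_⟩
  · rw [norm_smul, norm_inv, norm_norm, inv_mul_cancel₀ hψ.ne']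
  · have e1 := h3 e (hFE e he).1
    have e2 := h3 (-e) (hFE e he).2
    rw [map_neg] at e2
    have e3 : |ψ e| + δ * ‖ψ‖ ≤ ψ z := by
      have := h2 z hz
      rcases abs_cases (ψ e) with h | h <;> linarith
    simp only [smul_apply, smul_eq_mul, abs_mul, abs_inv, abs_norm]
    have := mul_le_mul_of_nonneg_left e3 (inv_nonneg.2 hψ.le)
    rw [mul_add, mul_comm δ, inv_mul_cancel_left₀ hψ.ne'] at this
    exact this

/-! ### Bushes -/

/-- A bounded bush with levels `K n`: every node is a convex combination of nodes of the next level,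
and, for each `n`, finitely many functionals of norm at most `1` separate all nodes of levels
beyond `n` from the symmetric convex hull of the nodes up to level `n`, with gap `δ`. -/
structure IsBush (δ : ℝ) (K : ℕ → Set X) (Φ : ℕ → Set (X →L[ℝ] ℝ)) : Prop where
  nonempty : (K 0).Nonempty
  bounded : IsBounded (⋃ n, K n)
  avg : ∀ n, K n ⊆ convexHull ℝ (K (n + 1))
  finite : ∀ n, (Φ n).Finite
  norm_le : ∀ n, ∀ φ ∈ Φ n, ‖φ‖ ≤ 1
  sep : ∀ n m, n < m → ∀ x ∈ K m, ∃ φ ∈ Φ n, ∀ j ≤ n, ∀ e ∈ K j, |φ e| + δ ≤ φ x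

/-- A node of the bush under construction: a point `pt` of the slice `sl`, together with the small
translation `shift` that turns approximate convex combinations into exact ones. -/
structure BushNode_s19 (X : Type*) where
  pt : X
  shift : X
  sl : Set X

/-- The position of a node in the bush. -/
def BushNode_s19.pos (ν : BushNode_s19 X) : X := ν.pt + ν.shift

/-- One branching step. The node at `y + w`, with `y` in the core of its slice `T`, is an exact convex
combination of finitely many new nodes whose slices lie in `T` and are separated from `F`. The core
gives only a combination `z` of their points with `‖y - z‖ < η`; giving all children the common
shift `w + (y - z)` absorbs the error. -/
lemma exists_children_s19 {C T : Set X} (hC : IsBounded C) (hCc : Convex ℝ C) {δ : ℝ}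
    (hδ : 0 < δ) (hbig : ∀ U, IsSlice C U → U ⊆ T → ∀ p, ¬ U ⊆ closedBall p (3 * δ))
    {η η' : ℝ} (hη' : 0 < η') {y : X} (hy : y ∈ sliceCore C T η) (w : X)
    {F : Set X} (hF : F.Finite) :
    ∃ N : Set (BushNode_s19 X), N.Finite ∧ (∀ ν ∈ N, IsSlice C ν.sl ∧ ν.sl ⊆ T ∧
      ν.pt ∈ sliceCore C ν.sl η' ∧ ‖ν.shift‖ ≤ ‖w‖ + η ∧
      ∃ φ : X →L[ℝ] ℝ, ‖φ‖ ≤ 1 ∧ ∀ z ∈ ν.sl, ∀ e ∈ F, |φ e| + δ ≤ φ z) ∧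
      y + w ∈ convexHull ℝ (N.image BushNode_s19.pos) := by
  -- `good x U`: `x` may serve as a child, with slice `U`
  let good : X → Set X → Prop := fun x U => IsSlice C U ∧ U ⊆ T ∧ x ∈ sliceCore C U η' ∧
    ∃ φ : X →L[ℝ] ℝ, ‖φ‖ ≤ 1 ∧ ∀ z ∈ U, ∀ e ∈ F, |φ e| + δ ≤ φ z
  obtain ⟨z, hz, hyz⟩ := hy.2 {x | ∃ U, good x U} (fun x ⟨U, hU⟩ => hU.2.1 hU.2.2.1.1) (by
    intro U hU hUT
    obtain ⟨V, hV, hVU, hφ⟩ := exists_slice_separated hC hCc hU hδ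
      (fun W hW hWU => hbig W hW (hWU.trans hUT)) hF
    obtain ⟨x, hx⟩ := sliceCore_nonempty hC hV hη'
    exact ⟨x, hVU hx.1, V, hV, hVU.trans hUT, hx, hφ⟩)
  rw [convexHull_eq_union_convexHull_finite_subsets] at hz
  obtain ⟨t, ht, hzt⟩ := mem_iUnion₂.1 hz
  choose! S hS using fun x (hx : x ∈ (t : Set X)) => ht hx
  refine ⟨(fun x => ⟨x, w + (y - z), S x⟩) '' (t : Set X), t.finite_toSet.image _, ?_, ?_⟩
  · rintro _ ⟨x, hx, rfl⟩
    obtain ⟨h1, h2, h3, h4⟩ := hS x hx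
    exact ⟨h1, h2, h3, (norm_add_le _ _).trans (by gcongr), h4⟩
  · have e : BushNode_s19.pos '' ((fun x => (⟨x, w + (y - z), S x⟩ : BushNode_s19 X)) '' (t : Set X)) =
        (fun x => x + (w + (y - z))) '' (t : Set X) := by
      rw [image_image]; rfl
    rw [e]
    have h := (AffineMap.id ℝ X + AffineMap.const ℝ X (w + (y - z))).image_convexHull (t : Set X)
    have h2 : y + w ∈ (AffineMap.id ℝ X + AffineMap.const ℝ X (w + (y - z))) ''
        convexHull ℝ (t : Set X) := ⟨z, hzt, by simp; abel⟩
    rw [h] at h2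
    exact h2

/-- If no slice of `C` contained in the slice `T₀` lies in a ball of radius `3 * δ`, then `T₀` is
the root slice of a bush with gap `δ / 2`: the slices are separated with gap `δ`, and the shifts at
level `n` have norm at most `δ / 2 * (1 - 1 / 2 ^ n)`. -/
lemma exists_bush_s19 {C T₀ : Set X} (hC : IsBounded C) (hCc : Convex ℝ C) (hT₀ : IsSlice C T₀)
    {δ : ℝ} (hδ : 0 < δ)
    (hbig : ∀ U, IsSlice C U → U ⊆ T₀ → ∀ p, ¬ U ⊆ closedBall p (3 * δ)) :
    ∃ K Φ, IsBush (X := X) (δ / 2) K Φ := by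
  -- a state consists of the current level and the positions of all nodes so far
  let Good : ℕ → Set (BushNode_s19 X) × Set X → Prop := fun n s =>
    s.1.Finite ∧ s.2.Finite ∧ ∀ ν ∈ s.1, IsSlice C ν.sl ∧ ν.sl ⊆ T₀ ∧
      ν.pt ∈ sliceCore C ν.sl (δ / 2 ^ (n + 2)) ∧ ‖ν.shift‖ ≤ δ / 2 * (1 - 1 / 2 ^ n) ∧
      ν.pos ∈ s.2
  let Next : Set (BushNode_s19 X) × Set X → Set (BushNode_s19 X) × Set X → Prop := fun s s' =>
    s.2 ⊆ s'.2 ∧ (∀ ν ∈ s.1, ν.pos ∈ convexHull ℝ (BushNode_s19.pos '' s'.1)) ∧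
    (∀ ν' ∈ s'.1, ∃ ν ∈ s.1, ν'.sl ⊆ ν.sl) ∧
    ∀ ν' ∈ s'.1, ∃ φ : X →L[ℝ] ℝ, ‖φ‖ ≤ 1 ∧ ∀ z ∈ ν'.sl, ∀ e ∈ s.2, |φ e| + δ ≤ φ z
  have step : ∀ n s, Good n s → ∃ s', Good (n + 1) s' ∧ Next s s' := by
    rintro n ⟨N, F⟩ ⟨hN, hF, hs⟩
    have h1 : ∀ ν ∈ N, ∃ N' : Set (BushNode_s19 X), N'.Finite ∧ (∀ ν' ∈ N', IsSlice C ν'.sl ∧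
        ν'.sl ⊆ ν.sl ∧ ν'.pt ∈ sliceCore C ν'.sl (δ / 2 ^ (n + 1 + 2)) ∧
        ‖ν'.shift‖ ≤ ‖ν.shift‖ + δ / 2 ^ (n + 2) ∧
        ∃ φ : X →L[ℝ] ℝ, ‖φ‖ ≤ 1 ∧ ∀ z ∈ ν'.sl, ∀ e ∈ F, |φ e| + δ ≤ φ z) ∧
        ν.pos ∈ convexHull ℝ (BushNode_s19.pos '' N') := fun ν hν =>
      exists_children_s19 hC hCc hδ
        (fun U hU hUT => hbig U hU (hUT.trans (hs ν hν).2.1)) (by positivity)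
        (hs ν hν).2.2.1 ν.shift hF
    choose! ch hch1 hch2 hch3 using h1
    have hfin : (⋃ ν ∈ N, ch ν).Finite := hN.biUnion hch1
    refine ⟨(⋃ ν ∈ N, ch ν, F ∪ BushNode_s19.pos '' ⋃ ν ∈ N, ch ν),
      ⟨hfin, hF.union (hfin.image _), ?_⟩, subset_union_left, ?_, ?_, ?_⟩
    · intro ν' hν'
      obtain ⟨ν, hν, hνν'⟩ := mem_iUnion₂.1 hν'
      obtain ⟨a1, a2, a3, a4, a5⟩ := hch2 ν hν ν' hνν'
      obtain ⟨b1, b2, b3, b4, b5⟩ := hs ν hν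
      refine ⟨a1, a2.trans b2, a3, a4.trans ?_, Or.inr (mem_image_of_mem _ hν')⟩
      refine (add_le_add_left b4 _).trans (le_of_eq ?_)
      rw [pow_succ, pow_succ]
      field_simp
      ring
    · intro ν hν
      exact convexHull_mono (image_mono (subset_biUnion_of_mem hν)) (hch3 ν hν)
    · intro ν' hν'
      obtain ⟨ν, hν, hνν'⟩ := mem_iUnion₂.1 hν'
      exact ⟨ν, hν, (hch2 ν hν ν' hνν').2.1⟩
    · intro ν' hν'
      obtain ⟨ν, hν, hνν'⟩ := mem_iUnion₂.1 hν'
      exact (hch2 ν hν ν' hνν').2.2.2.2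
  obtain ⟨y₀, hy₀⟩ := sliceCore_nonempty hC hT₀ (η := δ / 2 ^ (0 + 2)) (by positivity)
  choose! nxt hnxt1 hnxt2 using step
  let ν₀ : BushNode_s19 X := ⟨y₀, 0, T₀⟩
  let s : ℕ → Set (BushNode_s19 X) × Set X := fun n =>
    Nat.rec ({ν₀}, {ν₀.pos}) (fun n s => nxt n s) n
  have hgood : ∀ n, Good n (s n) := by
    intro n
    induction n with
    | zero =>
      refine ⟨finite_singleton _, finite_singleton _, ?_⟩
      rintro ν rfl
      exact ⟨hT₀, subset_rfl, hy₀, by simp [ν₀], rfl⟩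
    | succ n ih => exact hnxt1 n (s n) ih
  have hnext : ∀ n, Next (s n) (s (n + 1)) := fun n => hnxt2 n (s n) (hgood n)
  have hFmono : Monotone fun n => (s n).2 := monotone_nat_of_le_succ fun n => (hnext n).1
  have hsl : ∀ n m, n ≤ m → ∀ ν' ∈ (s m).1, ∃ ν ∈ (s n).1, ν'.sl ⊆ ν.sl := by
    intro n m hnm
    induction m, hnm using Nat.le_induction with
    | base => exact fun ν hν => ⟨ν, hν, subset_rfl⟩
    | succ m _ ih =>
      intro ν' hν'
      obtain ⟨ν, hν, h⟩ := (hnext m).2.2.1 ν' hν'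
      obtain ⟨ξ, hξ, h'⟩ := ih ν hν
      exact ⟨ξ, hξ, h.trans h'⟩
  have hshift : ∀ n, ∀ ν ∈ (s n).1, ‖ν.shift‖ ≤ δ / 2 := by
    intro n ν hν
    refine ((hgood n).2.2 ν hν).2.2.2.1.trans ?_
    have : (0 : ℝ) ≤ 1 / 2 ^ n := by positivity
    nlinarith
  choose! φ hφ1 hφ2 using fun n => (hnext n).2.2.2
  refine ⟨fun n => BushNode_s19.pos '' (s n).1, fun n => φ n '' (s (n + 1)).1, ?_⟩
  refine ⟨⟨_, mem_image_of_mem _ (mem_singleton ν₀)⟩, ?_, ?_, ?_, ?_, ?_⟩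
  · obtain ⟨R, hR⟩ := hC.exists_norm_le
    refine isBounded_iff_forall_norm_le.2 ⟨R + δ / 2, fun x hx => ?_⟩
    obtain ⟨n, ν, hν, rfl⟩ := mem_iUnion.1 hx
    have h := (hgood n).2.2 ν hν
    exact (norm_add_le _ _).trans
      (add_le_add (hR _ (h.1.subset h.2.2.1.1)) (hshift n ν hν))
  · rintro n _ ⟨ν, hν, rfl⟩
    exact (hnext n).2.1 ν hν
  · exact fun n => (hgood (n + 1)).1.image _
  · rintro n _ ⟨ν, hν, rfl⟩
    exact hφ1 n ν hν
  · rintro n m hnm _ ⟨ν', hν', rfl⟩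
    obtain ⟨ν, hν, hsub⟩ := hsl (n + 1) m hnm ν' hν'
    refine ⟨φ n ν, mem_image_of_mem _ hν, ?_⟩
    rintro j hj _ ⟨ξ, hξ, rfl⟩
    have h1 := hφ2 n ν hν ν'.pt (hsub ((hgood m).2.2 ν' hν').2.2.1.1) ξ.pos
      (hFmono hj ((hgood j).2.2 ξ hξ).2.2.2.2)
    have h2 : |φ n ν ν'.shift| ≤ δ / 2 := by
      have := (φ n ν).le_opNorm ν'.shift
      rw [Real.norm_eq_abs] at this
      nlinarith [hφ1 n ν hν, hshift m ν' hν', norm_nonneg ν'.shift]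
    have h3 : φ n ν ν'.pos = φ n ν ν'.pt + φ n ν ν'.shift := map_add _ _ _
    linarith [neg_le_of_abs_le h2]

/-- A linear functional does not decrease along a suitable branch of the bush. -/
lemma IsBush.exists_ge {δ : ℝ} {K : ℕ → Set X} {Φ : ℕ → Set (X →L[ℝ] ℝ)} (h : IsBush δ K Φ)
    (g : X →L[ℝ] ℝ) {n m : ℕ} (hnm : n ≤ m) {x : X} (hx : x ∈ K n) :
    ∃ y ∈ K m, g x ≤ g y := by
  induction m, hnm using Nat.le_induction with
  | base => exact ⟨x, hx, le_rfl⟩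
  | succ m _ ih =>
    obtain ⟨y, hy, hxy⟩ := ih
    by_contra! hcon
    have : convexHull ℝ (K (m + 1)) ⊆ {z | g z < g x} :=
      convexHull_min hcon (convex_halfSpace_lt g.isLinear _)
    exact absurd (this (h.avg m hy)) (not_lt.2 hxy)

/-! ### The two implications -/

/-- All slices of the union of a bush with gap `δ` have diameter at least `δ`, so under the
Radon–Nikodým property every slice of a bounded convex set contains slices lying in arbitrarily
small balls. -/
lemma exists_small_subslice_s19
    (hRNP : ∀ A : Set X, A.Nonempty → IsBounded A → ∀ ε > 0,
      ∃ (f : X →L[ℝ] ℝ) (α : ℝ), 0 < α ∧ (sliceOf A f α).Nonempty ∧ diam (sliceOf A f α) < ε)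
    {C T : Set X} (hC : IsBounded C) (hCc : Convex ℝ C) (hT : IsSlice C T) {r : ℝ} (hr : 0 < r) :
    ∃ U, IsSlice C U ∧ U ⊆ T ∧ ∃ p, U ⊆ closedBall p r := by
  by_contra! hcon
  obtain ⟨K, Φ, h⟩ := exists_bush_s19 hC hCc hT (δ := r / 3) (by positivity) (by
    intro U hU hUT p
    rw [mul_div_cancel₀ r three_ne_zero]
    exact hcon U hU hUT p)
  obtain ⟨x₀, hx₀⟩ := h.nonempty
  obtain ⟨f, α, -, ⟨x, hxA, hx⟩, hdiam⟩ :=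
    hRNP (⋃ n, K n) ⟨x₀, mem_iUnion.2 ⟨0, hx₀⟩⟩ h.bounded (r / 3 / 2) (by positivity)
  obtain ⟨n, hxn⟩ := mem_iUnion.1 hxA
  obtain ⟨y, hy, hxy⟩ := h.exists_ge f n.le_succ hxn
  obtain ⟨φ, hφ, hsep⟩ := h.sep n (n + 1) n.lt_succ_self y hy
  have h1 := hsep n le_rfl x hxn
  have h2 : dist y x ≤ diam (sliceOf (⋃ n, K n) f α) :=
    dist_le_diam_of_mem (h.bounded.subset fun z hz => hz.1)
      ⟨mem_iUnion.2 ⟨n + 1, hy⟩, hx.trans_le hxy⟩ ⟨hxA, hx⟩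
  have h3 : φ y - φ x ≤ dist y x := by
    rw [← map_sub, dist_eq_norm]
    refine (le_abs_self _).trans ((φ.le_opNorm _).trans ?_)
    exact mul_le_of_le_one_left (norm_nonneg _) (h.norm_le n φ hφ)
  linarith [le_abs_self (φ x)]

lemma isOpen_of_isOpen_weakTop {U : Set X} (hU : IsOpen[weakTop X] U) : IsOpen U := by
  obtain ⟨V, hV, rfl⟩ := isOpen_induced_iff.1 hU
  exact hV.preimage (continuous_pi fun f => f.continuous)

/-- If every slice of `B` has subslices in arbitrarily small balls, the limit of a nested sequence
of slices shrinking to a point is an almost preserved extreme point. -/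
lemma ape_nonempty_of_small_subslices [CompleteSpace X] {B : Set X} (hB : IsBounded B)
    (hcl : IsClosed B) (hne : B.Nonempty)
    (hsmall : ∀ T, IsSlice B T → ∀ r > 0, ∃ U, IsSlice B U ∧ U ⊆ T ∧ ∃ p, U ⊆ closedBall p r) :
    (ape B).Nonempty := by
  have step : ∀ (n : ℕ) (T : Set X), IsSlice B T → ∃ U, IsSlice B U ∧ U ⊆ T ∧
      ∃ p, U ⊆ closedBall p ((1 / 2) ^ n) := fun n T hT => hsmall T hT _ (by positivity)
  choose! nxt h1 h2 h3 using step
  let S : ℕ → Set X := fun n => Nat.rec B (fun n T => nxt n T) n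
  have hS : ∀ n, IsSlice B (S n) := by
    intro n
    induction n with
    | zero => exact isSlice_self hne
    | succ n ih => exact h1 n _ ih
  have hanti : Antitone S := antitone_nat_of_succ_le fun n => h2 n _ (hS n)
  choose p hp using fun n => h3 n _ (hS n)
  change ∀ n, S (n + 1) ⊆ closedBall (p n) ((1 / 2) ^ n) at hp
  choose x hx using fun n => (hS (n + 1)).1
  have hxp : ∀ N n, N ≤ n → dist (x n) (p N) ≤ (1 / 2) ^ N := fun N n hNn =>
    hp N (hanti (Nat.succ_le_succ hNn) (hx n))
  have hlim : Filter.Tendsto (fun n : ℕ => 2 * (1 / 2 : ℝ) ^ n) Filter.atTop (𝓝 0) := by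
    simpa using (tendsto_pow_atTop_nhds_zero_of_lt_one (r := (1 / 2 : ℝ)) (by norm_num)
      (by norm_num)).const_mul 2
  have hcau : CauchySeq x := by
    refine cauchySeq_of_le_tendsto_0 _ (fun n m N hn hm => ?_) hlim
    linarith [dist_triangle_right (x n) (x m) (p N), hxp N n hn, hxp N m hm]
  obtain ⟨x₀, hx₀⟩ := cauchySeq_tendsto_of_complete hcau
  have hx₀p : ∀ N, dist x₀ (p N) ≤ (1 / 2) ^ N := fun N =>
    isClosed_closedBall.mem_of_tendsto hx₀ (Filter.eventually_atTop.2 ⟨N, hxp N⟩)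
  refine ⟨x₀, hcl.mem_of_tendsto hx₀ (Filter.Eventually.of_forall fun n => (hS (n + 1)).subset (hx n)),
    fun U hU hxU => ?_⟩
  obtain ⟨ε, hε, hball⟩ := Metric.isOpen_iff.1 (isOpen_of_isOpen_weakTop hU) x₀ hxU
  obtain ⟨n, hn⟩ := (hlim.eventually_lt_const hε).exists
  obtain ⟨f, α, hα, hSf⟩ := (hS (n + 1)).exists_sliceOf hB
  refine ⟨f, α, hα, hSf ▸ (hS (n + 1)).1, hSf ▸ fun z hz => hball ?_⟩
  have hz' : dist z (p n) ≤ (1 / 2) ^ n := hp n hz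
  rw [mem_ball]
  linarith [dist_triangle_right z x₀ (p n), hx₀p n]

open scoped Pointwise in
/-- The equivalent unit ball obtained by adding a small ball to the symmetric closed convex hull of
a bush has no almost preserved extreme point. A point `x₀` of it is close to the symmetric hull of
the nodes up to some level `n`, hence has a weak neighbourhood, given by the functionals `Φ n`, that
stays away from a small ball around any node of a later level or its negative; but every slice
contains a translate, by a vector of the small ball, of such a node. -/
lemma IsBush.exists_ball {δ : ℝ} (hδ : 0 < δ) {K : ℕ → Set X} {Φ : ℕ → Set (X →L[ℝ] ℝ)}
    (h : IsBush δ K Φ) :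
    ∃ B : Set X, IsBounded B ∧ IsClosed B ∧ Convex ℝ B ∧ B = -B ∧ 0 ∈ interior B ∧
      ¬ (ape B).Nonempty := by
  set A : Set X := ⋃ n, K n with hA
  set D : Set X := convexHull ℝ (A ∪ -A) with hD
  set r := δ / 5 with hr
  have hr0 : 0 < r := by positivity
  have hDneg : -D = D := by
    rw [hD, ← convexHull_neg, Set.union_neg, neg_neg, union_comm]
  have hD0 : (0 : X) ∈ D := by
    obtain ⟨x, hx⟩ := h.nonempty
    have hxA : x ∈ A := mem_iUnion.2 ⟨0, hx⟩
    have := convex_convexHull ℝ (A ∪ -A) (subset_convexHull ℝ _ (Or.inl hxA))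
      (subset_convexHull ℝ _ (Or.inr (by simpa using hxA : -x ∈ -A)))
      (a := 1 / 2) (b := 1 / 2) (by norm_num) (by norm_num) (by norm_num)
    have e : (1 / 2 : ℝ) • x + (1 / 2 : ℝ) • (-x) = 0 := by simp
    rwa [e] at this
  set B : Set X := closure (D + closedBall (0 : X) r) with hB
  have hBb : IsBounded B := by
    refine IsBounded.closure (IsBounded.add ?_ isBounded_closedBall)
    refine isBounded_convexHull.2 (h.bounded.union ?_)
    exact h.bounded.neg
  refine ⟨B, hBb, isClosed_closure, ?_, ?_, ?_, ?_⟩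
  · exact ((convex_convexHull ℝ _).add (convex_closedBall (0 : X) r)).closure
  · have : -(D + closedBall (0 : X) r) = D + closedBall 0 r := by
      rw [neg_add, hDneg, neg_closedBall, neg_zero]
    rw [hB, neg_closure, this]
  · refine mem_interior_iff_mem_nhds.2 (Filter.mem_of_superset (closedBall_mem_nhds 0 hr0) ?_)
    exact fun x hx => subset_closure ⟨0, hD0, x, hx, zero_add x⟩
  rintro ⟨x₀, hx₀B, hx₀⟩
  obtain ⟨_, ⟨d, hd, u, hu, rfl⟩, hdist⟩ := Metric.mem_closure_iff.1 hx₀B r hr0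
  have hx₀d : ‖x₀ - d‖ ≤ 2 * r := by
    rw [dist_eq_norm] at hdist
    rw [mem_closedBall_zero_iff] at hu
    calc ‖x₀ - d‖ = ‖(x₀ - (d + u)) + u‖ := by congr 1; abel
      _ ≤ _ := (norm_add_le _ _).trans (by linarith [hdist.le])
  -- `d` lies in the symmetric hull of the nodes up to some level `n`
  obtain ⟨n, hn⟩ : ∃ n, ∀ (φ : X →L[ℝ] ℝ) (c : ℝ),
      (∀ j ≤ n, ∀ e ∈ K j, |φ e| ≤ c) → |φ d| ≤ c := by
    rw [hD, convexHull_eq_union_convexHull_finite_subsets] at hd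
    obtain ⟨t, ht, hdt⟩ := mem_iUnion₂.1 hd
    have hlev : ∀ z ∈ t, ∃ j, z ∈ K j ∨ -z ∈ K j := by
      intro z hz
      rcases ht hz with hz | hz
      · obtain ⟨j, hj⟩ := mem_iUnion.1 hz
        exact ⟨j, Or.inl hj⟩
      · obtain ⟨j, hj⟩ := mem_iUnion.1 hz
        exact ⟨j, Or.inr hj⟩
    choose! ℓ hℓ using hlev
    refine ⟨t.sup ℓ, fun φ c hc => ?_⟩
    have hconv : Convex ℝ {z | |φ z| ≤ c} := by
      have : {z | |φ z| ≤ c} = {z | -c ≤ φ z} ∩ {z | φ z ≤ c} := by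
        ext z; exact abs_le (a := φ z)
      rw [this]
      exact (convex_halfSpace_ge φ.isLinear _).inter (convex_halfSpace_le φ.isLinear _)
    refine convexHull_min (fun z hz => ?_) hconv hdt
    have hle : ℓ z ≤ t.sup ℓ := Finset.le_sup hz
    rcases hℓ z hz with h' | h'
    · exact hc _ hle z h'
    · have := hc _ hle (-z) h'
      rwa [map_neg, abs_neg] at this
  have hVopen : IsOpen[weakTop X] {v : X | ∀ φ ∈ Φ n, |φ v - φ x₀| < r} := by
    refine isOpen_induced_iff.2 ⟨{q | ∀ φ ∈ Φ n, |q φ - φ x₀| < r}, ?_, rfl⟩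
    have : {q : (X →L[ℝ] ℝ) → ℝ | ∀ φ ∈ Φ n, |q φ - φ x₀| < r} =
        ⋂ φ ∈ Φ n, {q | |q φ - φ x₀| < r} := by ext; simp
    rw [this]
    exact (h.finite n).isOpen_biInter fun φ _ =>
      isOpen_lt ((continuous_apply φ).sub continuous_const).abs continuous_const
  obtain ⟨g, α, -, ⟨b, hbB, hb⟩, hsub⟩ := hx₀ _ hVopen (fun φ _ => by simpa using hr0)
  set s := sSup ((fun y => g y) '' B) - α
  obtain ⟨_, hgt, ⟨d', hd', u', hu', rfl⟩⟩ :=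
    mem_closure_iff.1 hbB {z | s < g z} (isOpen_lt continuous_const g.continuous) hb
  -- some node or negative of a node takes a value of `g` at least that of the point found above,
  -- and it can be replaced by one of a level beyond `n`
  obtain ⟨k, hk, hkd⟩ : ∃ k ∈ A ∪ -A, g d' ≤ g k := by
    by_contra! hcon
    have : d' ∈ {z | g z < g d'} :=
      convexHull_min hcon (convex_halfSpace_lt g.isLinear (g d')) hd'
    exact lt_irrefl (g d') this
  have hnode : ∃ y ∈ ⋃ m > n, K m, g k ≤ g y ∨ g k ≤ g (-y) := by
    rcases hk with hk | hk
    · obtain ⟨j, hj⟩ := mem_iUnion.1 hk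
      obtain ⟨y, hy, hky⟩ := h.exists_ge g (le_max_left j (n + 1)) hj
      exact ⟨y, mem_iUnion₂.2 ⟨_, le_max_right j (n + 1), hy⟩, Or.inl hky⟩
    · obtain ⟨j, hj⟩ := mem_iUnion.1 hk
      obtain ⟨y, hy, hky⟩ := h.exists_ge (-g) (le_max_left j (n + 1)) hj
      exact ⟨y, mem_iUnion₂.2 ⟨_, le_max_right j (n + 1), hy⟩, Or.inr (by simpa using hky)⟩
  obtain ⟨y, hy, hky⟩ := hnode
  obtain ⟨m, hm, hym⟩ := mem_iUnion₂.1 hy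
  have hyA : y ∈ A := mem_iUnion.2 ⟨m, hym⟩
  obtain ⟨φ, hφ, hsep⟩ := h.sep n m hm y hym
  have hd1 : |φ d| ≤ φ y - δ := hn φ _ fun j hj e he => by linarith [hsep j hj e he]
  have hbd : ∀ v : X, |φ v| ≤ ‖v‖ := fun v =>
    (φ.le_opNorm v).trans (mul_le_of_le_one_left (norm_nonneg _) (h.norm_le n φ hφ))
  have hu1 := (hbd u').trans (mem_closedBall_zero_iff.1 hu')
  have hx1 := (hbd (x₀ - d)).trans hx₀d
  rw [map_sub] at hx1
  rw [abs_le] at hu1 hx1 hd1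
  have hin : ∀ z ∈ A ∪ -A, g k ≤ g z → |φ (z + u') - φ x₀| < r := by
    intro z hz hkz
    refine hsub ⟨subset_closure ⟨z, subset_convexHull ℝ _ hz, u', hu', rfl⟩, ?_⟩ φ hφ
    have hgt' : s < g (d' + u') := hgt
    rw [map_add] at hgt' ⊢
    change s < g z + g u'
    linarith
  rcases hky with hky | hky
  · have := abs_lt.1 (hin y (Or.inl hyA) hky)
    rw [map_add] at this
    linarith
  · have := abs_lt.1 (hin (-y) (Or.inr (by simpa using hyA)) hky)
    rw [map_add, map_neg] at this
    linarith

end Construction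

/-- A real Banach space `X` has the Radon–Nikodým property (in its geometric
form: every nonempty bounded subset admits nonempty slices of arbitrarily small diameter) if
and only if the closed unit ball of every equivalent norm on `X` — i.e. every bounded, closed,
convex, symmetric subset of `X` with `0` in its norm-interior — has an almost preserved
extreme point. -/
theorem rnp_iff_every_renorming_ball_has_ape {X : Type*} [NormedAddCommGroup X]
    [NormedSpace ℝ X] [CompleteSpace X] :
    (∀ A : Set X, A.Nonempty → Bornology.IsBounded A → ∀ ε > 0,
      ∃ (f : X →L[ℝ] ℝ) (α : ℝ), 0 < α ∧ (sliceOf A f α).Nonempty ∧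
        Metric.diam (sliceOf A f α) < ε) ↔
    (∀ B : Set X, Bornology.IsBounded B → IsClosed B → Convex ℝ B → B = -B →
      0 ∈ interior B → (ape B).Nonempty) := by
  constructor
  · intro hRNP B hBb hBcl hBc _ hB0
    exact ape_nonempty_of_small_subslices hBb hBcl ⟨0, interior_subset hB0⟩
      fun T hT r hr => exists_small_subslice_s19 hRNP hBb hBc hT hr
  · intro hape A hAne hAb ε hε
    by_contra! hcon
    have hbig : ∀ U, IsSlice (convexHull ℝ A) U → U ⊆ convexHull ℝ A →
        ∀ p, ¬ U ⊆ closedBall p (3 * (ε / 7)) := by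
      rintro _ ⟨⟨x, hx0⟩, f, s, rfl⟩ - p hUp
      obtain ⟨hxC, hx⟩ := hx0
      -- a slice of the convex hull contains the slice of `A` with the same functional
      have hne : {a ∈ A | s < f a}.Nonempty := by
        by_contra hempty
        have hle : ∀ a ∈ A, f a ≤ s := fun a ha => not_lt.1 fun h => hempty ⟨a, ha, h⟩
        exact absurd (convexHull_min hle (convex_halfSpace_le f.isLinear s) hxC) (not_le.2 hx)
      have hslice : IsSlice A {a ∈ A | s < f a} := ⟨hne, f, s, rfl⟩
      obtain ⟨g, α, hα, hg⟩ := hslice.exists_sliceOf hAb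
      have h1 := hcon g α hα (hg ▸ hne)
      rw [← hg] at h1
      have hsub : {a ∈ A | s < f a} ⊆ closedBall p (3 * (ε / 7)) := fun a ha =>
        hUp ⟨subset_convexHull ℝ A ha.1, ha.2⟩
      have h2 : diam {a ∈ A | s < f a} ≤ 2 * (3 * (ε / 7)) :=
        diam_le_of_subset_closedBall (by positivity) hsub
      linarith
    obtain ⟨K, Φ, h⟩ := exists_bush_s19 (isBounded_convexHull.2 hAb) (convex_convexHull ℝ A)
      (isSlice_self hAne.convexHull) (δ := ε / 7) (by positivity) hbig
    obtain ⟨B, h1, h2, h3, h4, h5, h6⟩ := h.exists_ball (by positivity)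
    exact h6 (hape B h1 h2 h3 h4 h5)
end
end
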